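/- arXiv:1203.0676 — 2 statements merged into one kernel-verified Lean document; each statement's English description precedes it below -/
import Mathlib

section
/- Let ρ be a probability density on ℝ^d and ε > 0. Then the convolution ρ_ε = ρ * θ_ε is a smooth, strictly positive probability density and its Fisher information satisfies ∫_{ℝ^d} |∇ρ_ε(x)|² / ρ_ε(x) dx ≤ ε^{−4} ∫_{ℝ^d} |y|² θ_ε(y) dy = d ε^{−2}. -/
open MeasureTheory

/-- The rescaled Gaussian density `θ_ε(x) = ε^{-d} (2π)^{-d/2} exp(-|x/ε|²/2)` on `ℝ^d`. -/
noncomputable def gaussMollifier (d : ℕ) (ε : ℝ) (x : EuclideanSpace ℝ (Fin d)) : ℝ :=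
  ε ^ (-(d : ℝ)) * (2 * Real.pi) ^ (-(d : ℝ) / 2) * Real.exp (-(‖x‖ ^ 2 / ε ^ 2) / 2)

/-- The mollification `ρ_ε = ρ * θ_ε`, i.e. `(ρ * θ_ε)(x) = ∫ ρ(x - y) θ_ε(y) dy`. -/
noncomputable def mollify (d : ℕ) (ρ : EuclideanSpace ℝ (Fin d) → ℝ) (ε : ℝ)
    (x : EuclideanSpace ℝ (Fin d)) : ℝ :=
  ∫ y, ρ (x - y) * gaussMollifier d ε y

/-!
Moving the convolution onto the kernel, `ρ * θ_ε = ∫ θ_ε(· - t) dμ(t)` with `μ` the measure of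
density `ρ`, makes everything a property of a kernel `g` integrated against a probability measure.
A Schwartz kernel may be differentiated under the integral, and Cauchy–Schwarz gives
`‖∫ ∇g(x - t) dμ‖² / ∫ g(x - t) dμ ≤ ∫ (‖∇g‖² / g)(x - t) dμ`; integrating in `x` shows that the
Fisher information of `μ * g` is at most that of `g`. For the Gaussian kernel
`∇θ_ε(y) = -ε⁻² θ_ε(y) y`, so its Fisher information is `ε⁻⁴ ∫ ‖y‖² θ_ε(y) dy`, and integrating
by parts in `∫ Dθ_ε(y) y dy = -d ∫ θ_ε` evaluates the second moment.
-/

open scoped ContDiff ENNReal Nat SchwartzMap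

section ConvolutionWithMeasure

variable {G F : Type*} [AddGroup G] [MeasurableSpace G] [MeasurableAdd₂ G] [MeasurableNeg G]
  [NormedAddCommGroup F] {ν μ : Measure G} [ν.IsAddRightInvariant]

lemma lintegral_lintegral_comp_sub [SFinite ν] [SFinite μ] {g : G → ℝ≥0∞}
    (hg : Measurable g) : ∫⁻ x, ∫⁻ t, g (x - t) ∂μ ∂ν = μ Set.univ * ∫⁻ y, g y ∂ν := by
  rw [lintegral_lintegral_swap (by fun_prop)]
  simp only [lintegral_sub_right_eq_self g, lintegral_const, mul_comm]

lemma integrable_comp_sub_prod [SFinite ν] [IsFiniteMeasure μ] {g : G → F}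
    (hg : Integrable g ν) : Integrable (fun p : G × G ↦ g (p.1 - p.2)) (ν.prod μ) :=
  (measurePreserving_sub_prod ν μ).integrable_comp_of_integrable (hg.comp_fst μ)

variable [NormedSpace ℝ F]

lemma integrable_integral_comp_sub [SFinite ν] [IsFiniteMeasure μ] {g : G → F}
    (hg : Integrable g ν) : Integrable (fun x ↦ ∫ t, g (x - t) ∂μ) ν :=
  (integrable_comp_sub_prod hg).integral_prod_left

lemma integral_integral_comp_sub [CompleteSpace F] [SFinite ν] [IsFiniteMeasure μ] {g : G → F}
    (hg : Integrable g ν) : ∫ x, ∫ t, g (x - t) ∂μ ∂ν = μ.real Set.univ • ∫ y, g y ∂ν := by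
  rw [integral_integral_swap (integrable_comp_sub_prod hg)]
  simp only [integral_sub_right_eq_self g, integral_const]

end ConvolutionWithMeasure

section CauchySchwarz

lemma ofReal_norm_integral_sq_div_integral_le {α F : Type*} [MeasurableSpace α] {μ : Measure α}
    [NormedAddCommGroup F] [NormedSpace ℝ F] {f : α → F} {w : α → ℝ}
    (hf : AEStronglyMeasurable f μ) (hw : Integrable w μ) (hw_pos : ∀ a, 0 < w a) :
    ENNReal.ofReal (‖∫ a, f a ∂μ‖ ^ 2 / ∫ a, w a ∂μ) ≤
      ∫⁻ a, ENNReal.ofReal (‖f a‖ ^ 2 / w a) ∂μ := by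
  set A := ∫⁻ a, ENNReal.ofReal (‖f a‖ ^ 2 / w a) ∂μ
  have norm_eq (a : α) : ‖f a‖ₑ =
      ENNReal.ofReal (‖f a‖ ^ 2 / w a) ^ (1 / 2 : ℝ) * ENNReal.ofReal (w a) ^ (1 / 2 : ℝ) := by
    rw [← ENNReal.mul_rpow_of_nonneg _ _ (by norm_num), ← ENNReal.ofReal_mul' (hw_pos a).le,
      div_mul_cancel₀ _ (hw_pos a).ne', ENNReal.ofReal_rpow_of_nonneg (by positivity) (by norm_num),
      ← Real.sqrt_eq_rpow, Real.sqrt_sq (norm_nonneg _), ofReal_norm]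
  have sqrt_bound : ‖∫ a, f a ∂μ‖ₑ ≤
      A ^ (1 / 2 : ℝ) * ENNReal.ofReal (∫ a, w a ∂μ) ^ (1 / 2 : ℝ) := calc
    ‖∫ a, f a ∂μ‖ₑ ≤ ∫⁻ a, ‖f a‖ₑ ∂μ := enorm_integral_le_lintegral_enorm f
    _ ≤ A ^ (1 / 2 : ℝ) * (∫⁻ a, ENNReal.ofReal (w a) ∂μ) ^ (1 / 2 : ℝ) := by
      simp only [norm_eq]
      exact ENNReal.lintegral_mul_norm_pow_le
        ((hf.norm.aemeasurable.pow_const 2).div hw.aemeasurable).ennreal_ofReal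
        hw.aemeasurable.ennreal_ofReal (by norm_num) (by norm_num) (by norm_num)
    _ = _ := by
      rw [ofReal_integral_eq_lintegral_ofReal hw (.of_forall fun a ↦ (hw_pos a).le)]
  have sq_bound : ENNReal.ofReal (‖∫ a, f a ∂μ‖ ^ 2) ≤ A * ENNReal.ofReal (∫ a, w a ∂μ) := by
    have := pow_le_pow_left' sqrt_bound 2
    rwa [← ENNReal.mul_rpow_of_nonneg _ _ (by norm_num), ← ENNReal.rpow_mul_natCast,
      show (1 / 2 : ℝ) * (2 : ℕ) = 1 by norm_num, ENNReal.rpow_one, ← ofReal_norm,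
      ← ENNReal.ofReal_pow (norm_nonneg _)] at this
  rcases (integral_nonneg fun a ↦ (hw_pos a).le : 0 ≤ ∫ a, w a ∂μ).eq_or_lt with hW | hW
  · simp [← hW]
  · rw [ENNReal.ofReal_div_of_pos hW]
    exact ENNReal.div_le_of_le_mul sq_bound

end CauchySchwarz

section Gaussian

lemma one_add_pow_mul_exp_neg_mul_sq_le {b r : ℝ} (hb : 0 < b) (hr : 0 ≤ r) (m : ℕ) :
    (1 + r) ^ m * Real.exp (-b * r ^ 2) ≤ m ! * Real.exp (1 + 1 / (4 * b)) := by
  have pow_le : (1 + r) ^ m ≤ m ! * Real.exp (1 + r) := by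
    rw [← div_le_iff₀' (by positivity)]
    exact Real.pow_div_factorial_le_exp (1 + r) (by positivity) m
  have exponent_le : 1 + r + -b * r ^ 2 ≤ 1 + 1 / (4 * b) := by
    have : 1 / (4 * b) - r + b * r ^ 2 = b * (r - 1 / (2 * b)) ^ 2 := by field_simp; ring
    linarith [mul_nonneg hb.le (sq_nonneg (r - 1 / (2 * b)))]
  calc (1 + r) ^ m * Real.exp (-b * r ^ 2)
      ≤ m ! * Real.exp (1 + r) * Real.exp (-b * r ^ 2) := by gcongr
    _ = m ! * Real.exp (1 + r + -b * r ^ 2) := by rw [mul_assoc, ← Real.exp_add]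
    _ ≤ _ := by gcongr

lemma exists_norm_iteratedFDeriv_exp_comp_le {E : Type*} [NormedAddCommGroup E] [NormedSpace ℝ E]
    {q : E → ℝ} (hq : q.HasTemperateGrowth) (n : ℕ) :
    ∃ (m : ℕ) (C : ℝ), 0 ≤ C ∧ ∀ x,
      ‖iteratedFDeriv ℝ n (fun x ↦ Real.exp (q x)) x‖ ≤ C * (1 + ‖x‖) ^ m * Real.exp (q x) := by
  obtain ⟨k, C, hC, hqC⟩ := hq.norm_iteratedFDeriv_le_uniform n
  refine ⟨k * n, n ! * (1 + C) ^ n, by positivity, fun x ↦ ?_⟩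
  have exp_derivs (i : ℕ) (_ : i ≤ n) :
      ‖iteratedFDeriv ℝ i Real.exp (q x)‖ ≤ Real.exp (q x) := by
    rw [norm_iteratedFDeriv_eq_norm_iteratedDeriv, iteratedDeriv_eq_iterate, Real.iter_deriv_exp,
      Real.norm_of_nonneg (Real.exp_pos _).le]
  have one_le : 1 ≤ (1 + ‖x‖) ^ k := one_le_pow₀ (by linarith [norm_nonneg x])
  have q_derivs (i : ℕ) (hi : 1 ≤ i) (hin : i ≤ n) :
      ‖iteratedFDeriv ℝ i q x‖ ≤ ((1 + C) * (1 + ‖x‖) ^ k) ^ i := calc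
    _ ≤ C * (1 + ‖x‖) ^ k := hqC i hin x
    _ ≤ (1 + C) * (1 + ‖x‖) ^ k := by gcongr; linarith
    _ ≤ _ := le_self_pow₀ (by nlinarith) (by lia)
  calc ‖iteratedFDeriv ℝ n (fun x ↦ Real.exp (q x)) x‖
      ≤ n ! * Real.exp (q x) * ((1 + C) * (1 + ‖x‖) ^ k) ^ n :=
        norm_iteratedFDeriv_comp_le (Real.contDiff_exp (n := ∞)) hq.1 (by exact_mod_cast le_top) x
          exp_derivs q_derivs
    _ = _ := by rw [mul_pow, ← pow_mul]; ring

/-- The Gaussian `x ↦ exp (-b ‖x‖²)` as a Schwartz function. -/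
noncomputable def gaussianSchwartz (V : Type*) [NormedAddCommGroup V] [InnerProductSpace ℝ V]
    {b : ℝ} (hb : 0 < b) : 𝓢(V, ℝ) where
  toFun x := Real.exp (-b * ‖x‖ ^ 2)
  smooth' := (contDiff_const.mul (contDiff_norm_sq ℝ)).exp
  decay' k n := by
    obtain ⟨m, C, hC, h⟩ := exists_norm_iteratedFDeriv_exp_comp_le
      (q := fun x : V ↦ -b * ‖x‖ ^ 2) (by fun_prop) n
    refine ⟨C * ((k + m)! * Real.exp (1 + 1 / (4 * b))), fun x ↦ ?_⟩
    calc _ ≤ (1 + ‖x‖) ^ k * (C * (1 + ‖x‖) ^ m * Real.exp (-b * ‖x‖ ^ 2)) := by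
          gcongr
          · linarith
          · exact h x
      _ = C * ((1 + ‖x‖) ^ (k + m) * Real.exp (-b * ‖x‖ ^ 2)) := by rw [pow_add]; ring
      _ ≤ _ := mul_le_mul_of_nonneg_left
        (one_add_pow_mul_exp_neg_mul_sq_le hb (norm_nonneg x) _) hC

end Gaussian

section SchwartzConvolution

variable {E F : Type*} [NormedAddCommGroup E] [NormedSpace ℝ E] [MeasurableSpace E] [BorelSpace E]
  [SecondCountableTopology E] [NormedAddCommGroup F] [NormedSpace ℝ F]
  {μ : Measure E} [IsFiniteMeasure μ]

lemma integrable_schwartz_comp_sub (g : 𝓢(E, F)) (x : E) : Integrable (fun t ↦ g (x - t)) μ :=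
  .of_bound (by fun_prop : Continuous fun t ↦ g (x - t)).aestronglyMeasurable
    _ (.of_forall fun t ↦ g.norm_le_seminorm ℝ (x - t))

lemma hasFDerivAt_integral_schwartz_comp_sub (g : 𝓢(E, F)) (x : E) :
    HasFDerivAt (fun x ↦ ∫ t, g (x - t) ∂μ) (∫ t, fderiv ℝ g (x - t) ∂μ) x := by
  let g' := SchwartzMap.fderivCLM ℝ E F g
  exact hasFDerivAt_integral_of_dominated_of_fderiv_le Filter.univ_mem
    (.of_forall fun y ↦ (integrable_schwartz_comp_sub g y).aestronglyMeasurable)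
    (integrable_schwartz_comp_sub g x)
    (integrable_schwartz_comp_sub g' x).aestronglyMeasurable
    (.of_forall fun t y _ ↦ g'.norm_le_seminorm ℝ (y - t))
    (integrable_const _)
    (.of_forall fun t y _ ↦ (hasFDerivAt_comp_sub t).2 g.differentiableAt.hasFDerivAt)

lemma contDiff_integral_schwartz_comp_sub.{u} {E F : Type u} [NormedAddCommGroup E]
    [NormedSpace ℝ E] [MeasurableSpace E] [BorelSpace E] [SecondCountableTopology E]
    [NormedAddCommGroup F] [NormedSpace ℝ F] {μ : Measure E} [IsFiniteMeasure μ] (g : 𝓢(E, F)) :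
    ContDiff ℝ ∞ (fun x ↦ ∫ t, g (x - t) ∂μ) := by
  refine contDiff_infty.2 fun n ↦ ?_
  induction n generalizing F with
  | zero =>
    exact contDiff_zero.2 <| continuous_iff_continuousAt.2 fun x ↦
      (hasFDerivAt_integral_schwartz_comp_sub g x).continuousAt
  | succ n ih =>
    exact contDiff_succ_iff_hasFDerivAt.2
      ⟨_, ih (SchwartzMap.fderivCLM ℝ E F g), hasFDerivAt_integral_schwartz_comp_sub g⟩

lemma integral_schwartz_comp_sub_pos [NeZero μ] {g : 𝓢(E, ℝ)} (hg : ∀ x, 0 < g x) (x : E) :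
    0 < ∫ t, g (x - t) ∂μ := by
  rw [integral_pos_iff_support_of_nonneg (fun t ↦ (hg (x - t)).le)
    (integrable_schwartz_comp_sub g x),
    Function.support_eq_univ (fun t ↦ (hg (x - t)).ne')]
  exact NeZero.pos _

end SchwartzConvolution

section Euler

variable {E F : Type*} [NormedAddCommGroup E] [NormedSpace ℝ E] [MeasurableSpace E] [BorelSpace E]
  [NormedAddCommGroup F] [NormedSpace ℝ F] (μ : Measure E)

lemma integrable_clm_smul_schwartz [SecondCountableTopology E] [μ.HasTemperateGrowth]
    (L : E →L[ℝ] ℝ) (g : 𝓢(E, F)) :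
    Integrable (fun x ↦ L x • g x) μ := by
  refine ((g.integrable_pow_mul μ 1).const_mul ‖L‖).mono' (by fun_prop) (.of_forall fun x ↦ ?_)
  rw [norm_smul, pow_one, ← mul_assoc]
  gcongr
  exact L.le_opNorm x

variable [FiniteDimensional ℝ E] [μ.IsAddHaarMeasure]

lemma integral_clm_mul_fderiv_schwartz (L : E →L[ℝ] ℝ) (g : 𝓢(E, ℝ)) (v : E) :
    ∫ x, L x * fderiv ℝ g x v ∂μ = -(L v * ∫ x, g x ∂μ) := by
  let g' := SchwartzMap.evalCLM ℝ E ℝ v (SchwartzMap.fderivCLM ℝ E ℝ g)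
  rw [integral_mul_fderiv_eq_neg_fderiv_mul_of_integrable]
  · simp [integral_const_mul]
  · simpa using (g.integrable (μ := μ)).const_mul (L v)
  · exact integrable_clm_smul_schwartz μ L g'
  · exact integrable_clm_smul_schwartz μ L g
  · exact fun x _ ↦ L.differentiableAt
  · exact fun x _ ↦ g.differentiableAt

lemma integral_fderiv_schwartz_apply_self (g : 𝓢(E, ℝ)) :
    ∫ x, fderiv ℝ g x x ∂μ = -(Module.finrank ℝ E * ∫ x, g x ∂μ) := by
  let b := Module.finBasis ℝ E
  let coord (i) : E →L[ℝ] ℝ := (b.coord i).toContinuousLinearMap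
  let g' (v : E) := SchwartzMap.evalCLM ℝ E ℝ v (SchwartzMap.fderivCLM ℝ E ℝ g)
  have expand (x : E) : fderiv ℝ g x x = ∑ i, coord i x * fderiv ℝ g x (b i) := calc
    _ = fderiv ℝ g x (∑ i, coord i x • b i) := congrArg (fderiv ℝ g x) (b.sum_repr x).symm
    _ = _ := by simp only [map_sum, map_smul, smul_eq_mul]
  calc ∫ x, fderiv ℝ g x x ∂μ = ∑ i, ∫ x, coord i x * fderiv ℝ g x (b i) ∂μ := by
        simp_rw [expand]
        exact integral_finsetSum _ fun i _ ↦ integrable_clm_smul_schwartz μ (coord i) (g' (b i))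
    _ = ∑ i, -(coord i (b i) * ∫ x, g x ∂μ) := by simp only [integral_clm_mul_fderiv_schwartz]
    _ = -(Module.finrank ℝ E * ∫ x, g x ∂μ) := by simp [coord]

end Euler

section Fisher

lemma norm_gradient_eq_norm_fderiv {V : Type*} [NormedAddCommGroup V] [InnerProductSpace ℝ V]
    [CompleteSpace V] (f : V → ℝ) (x : V) : ‖gradient f x‖ = ‖fderiv ℝ f x‖ :=
  LinearIsometryEquiv.norm_map _ _

variable {V : Type*} [NormedAddCommGroup V] [InnerProductSpace ℝ V] [FiniteDimensional ℝ V]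
  [MeasurableSpace V] [BorelSpace V]

/-- The Fisher information `∫ ‖∇f‖² / f ∈ [0, ∞]` of a density `f`. Points where `f` vanishes
contribute nothing, since `x / 0 = 0`. -/
noncomputable def fisherInformation (f : V → ℝ) : ℝ≥0∞ :=
  ∫⁻ x, ENNReal.ofReal (‖gradient f x‖ ^ 2 / f x)

lemma fisherInformation_integral_schwartz_comp_sub_le (μ : Measure V) [IsFiniteMeasure μ]
    {g : 𝓢(V, ℝ)} (hg : ∀ x, 0 < g x) :
    fisherInformation (fun x ↦ ∫ t, g (x - t) ∂μ) ≤ μ Set.univ * fisherInformation g := by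
  let g' := SchwartzMap.fderivCLM ℝ V ℝ g
  let F (y : V) := ENNReal.ofReal (‖g' y‖ ^ 2 / g y)
  have hF : Measurable F := by fun_prop
  calc fisherInformation (fun x ↦ ∫ t, g (x - t) ∂μ) ≤ ∫⁻ x, ∫⁻ t, F (x - t) ∂μ := by
        refine lintegral_mono fun x ↦ ?_
        rw [norm_gradient_eq_norm_fderiv, (hasFDerivAt_integral_schwartz_comp_sub g x).fderiv]
        exact ofReal_norm_integral_sq_div_integral_le
          (integrable_schwartz_comp_sub g' x).aestronglyMeasurable
          (integrable_schwartz_comp_sub g x) fun t ↦ hg (x - t)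
    _ = μ Set.univ * ∫⁻ y, F y := lintegral_lintegral_comp_sub hF
    _ = μ Set.univ * fisherInformation g := by
        simp only [fisherInformation, norm_gradient_eq_norm_fderiv, F, g',
          SchwartzMap.fderivCLM_apply]

end Fisher

section Mollifier

variable {d : ℕ} {ε : ℝ}

/-- The kernel `gaussMollifier d ε` as a Schwartz function. -/
noncomputable def gaussMollifierSchwartz (d : ℕ) (hε : 0 < ε) : 𝓢(EuclideanSpace ℝ (Fin d), ℝ) :=
  (ε ^ (-(d : ℝ)) * (2 * Real.pi) ^ (-(d : ℝ) / 2)) •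
    gaussianSchwartz (EuclideanSpace ℝ (Fin d)) (show 0 < 1 / (2 * ε ^ 2) by positivity)

lemma coe_gaussMollifierSchwartz (hε : 0 < ε) :
    ⇑(gaussMollifierSchwartz d hε) = gaussMollifier d ε := by
  ext x
  have exponent : -(1 / (2 * ε ^ 2)) * ‖x‖ ^ 2 = -(‖x‖ ^ 2 / ε ^ 2) / 2 := by ring
  exact congrArg (fun s ↦ ε ^ (-(d : ℝ)) * (2 * Real.pi) ^ (-(d : ℝ) / 2) * Real.exp s) exponent

lemma gaussMollifier_pos (hε : 0 < ε) (x : EuclideanSpace ℝ (Fin d)) :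
    0 < gaussMollifier d ε x := by
  unfold gaussMollifier
  positivity

lemma integrable_norm_sq_mul_gaussMollifier (hε : 0 < ε) :
    Integrable fun x ↦ ‖x‖ ^ 2 * gaussMollifier d ε x := by
  simpa [coe_gaussMollifierSchwartz, abs_of_pos (gaussMollifier_pos hε _)] using
    (gaussMollifierSchwartz d hε).integrable_pow_mul volume 2

lemma integral_gaussMollifier (hε : 0 < ε) : ∫ x, gaussMollifier d ε x = 1 := by
  have gauss_integral : ∫ x : EuclideanSpace ℝ (Fin d), Real.exp (-(‖x‖ ^ 2 / ε ^ 2) / 2) =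
      ε ^ (d : ℝ) * (2 * Real.pi) ^ ((d : ℝ) / 2) := calc
    _ = ∫ x : EuclideanSpace ℝ (Fin d), Real.exp (-(1 / (2 * ε ^ 2)) * ‖x‖ ^ 2) := by
      congr! 3 with x
      ring
    _ = (Real.pi / (1 / (2 * ε ^ 2))) ^ ((d : ℝ) / 2) := by
      rw [GaussianFourier.integral_rexp_neg_mul_sq_norm (by positivity), finrank_euclideanSpace_fin]
    _ = (ε ^ (2 : ℝ) * (2 * Real.pi)) ^ ((d : ℝ) / 2) := by
      rw [Real.rpow_two]
      congr 1
      field_simp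
    _ = _ := by
      rw [Real.mul_rpow (by positivity) (by positivity), ← Real.rpow_mul hε.le,
        mul_div_cancel₀ _ two_ne_zero]
  simp only [gaussMollifier]
  rw [integral_const_mul, gauss_integral, neg_div, Real.rpow_neg hε.le,
    Real.rpow_neg (by positivity)]
  field_simp

lemma hasGradientAt_gaussMollifier (d : ℕ) (ε : ℝ) (x : EuclideanSpace ℝ (Fin d)) :
    HasGradientAt (gaussMollifier d ε) (-(ε ^ (-2 : ℤ) * gaussMollifier d ε x) • x) x := by
  have deriv_exponent : HasFDerivAt (fun y : EuclideanSpace ℝ (Fin d) ↦ -(‖y‖ ^ 2 / ε ^ 2) / 2)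
      (-(ε ^ (-2 : ℤ)) • innerSL ℝ x) x := by
    convert! (hasStrictFDerivAt_norm_sq x).hasFDerivAt.const_mul (-(ε ^ 2)⁻¹ / 2) using 1
    · ext y
      ring
    · ext y
      simp only [zpow_neg, zpow_ofNat, neg_smul, neg_apply, smul_apply, coe_innerSL_apply,
        smul_eq_mul, nsmul_eq_mul, Nat.cast_ofNat]
      ring
  rw [hasGradientAt_iff_hasFDerivAt]
  convert! deriv_exponent.exp.const_mul (ε ^ (-(d : ℝ)) * (2 * Real.pi) ^ (-(d : ℝ) / 2)) using 1
  ext y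
  simp only [zpow_neg, zpow_ofNat, gaussMollifier, neg_smul, map_neg, map_smul, neg_apply,
    smul_apply, InnerProductSpace.toDual_apply_apply, smul_eq_mul, smul_neg, coe_innerSL_apply]
  ring

lemma fisherInformation_gaussMollifier (hε : 0 < ε) :
    fisherInformation (gaussMollifier d ε) =
      ENNReal.ofReal (ε ^ (-4 : ℤ) * ∫ y, ‖y‖ ^ 2 * gaussMollifier d ε y) := by
  have integrand (x : EuclideanSpace ℝ (Fin d)) :
      ‖gradient (gaussMollifier d ε) x‖ ^ 2 / gaussMollifier d ε x =
        ε ^ (-4 : ℤ) * (‖x‖ ^ 2 * gaussMollifier d ε x) := by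
    have := gaussMollifier_pos hε x
    rw [(hasGradientAt_gaussMollifier d ε x).gradient, norm_smul, mul_pow, Real.norm_eq_abs, sq_abs]
    field_simp
  simp only [fisherInformation, integrand]
  rw [← integral_const_mul, ofReal_integral_eq_lintegral_ofReal
    ((integrable_norm_sq_mul_gaussMollifier hε).const_mul _)]
  exact .of_forall fun x ↦ mul_nonneg (by positivity)
    (mul_nonneg (by positivity) (gaussMollifier_pos hε x).le)

lemma integral_norm_sq_mul_gaussMollifier (hε : 0 < ε) :
    ∫ y, ‖y‖ ^ 2 * gaussMollifier d ε y = d * ε ^ 2 := by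
  have euler : ∫ x, fderiv ℝ (gaussMollifier d ε) x x = -d := by
    simpa [coe_gaussMollifierSchwartz, integral_gaussMollifier hε] using
      integral_fderiv_schwartz_apply_self volume (gaussMollifierSchwartz d hε)
  have radial (x : EuclideanSpace ℝ (Fin d)) : fderiv ℝ (gaussMollifier d ε) x x =
      -(ε ^ (-2 : ℤ) * (‖x‖ ^ 2 * gaussMollifier d ε x)) := by
    rw [(hasGradientAt_gaussMollifier d ε x).hasFDerivAt.fderiv,
      InnerProductSpace.toDual_apply_apply, real_inner_smul_left, real_inner_self_eq_norm_sq]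
    ring
  have scaled : ε ^ (-2 : ℤ) * ∫ y, ‖y‖ ^ 2 * gaussMollifier d ε y = d := by
    simpa only [radial, integral_neg, integral_const_mul, neg_inj] using euler
  rw [← scaled]
  field_simp

/-- The mollification `μ * θ_ε` of a measure `μ`, so that `mollify d ρ ε` is the case of the
measure with density `ρ`. -/
noncomputable def mollifyMeasure (d : ℕ) (μ : Measure (EuclideanSpace ℝ (Fin d))) (ε : ℝ)
    (x : EuclideanSpace ℝ (Fin d)) : ℝ :=
  ∫ t, gaussMollifier d ε (x - t) ∂μ

theorem mollify_fisher_bound_general (d : ℕ) (μ : Measure (EuclideanSpace ℝ (Fin d)))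
    [IsProbabilityMeasure μ] (ε : ℝ) (hε : 0 < ε) :
    ContDiff ℝ ∞ (mollifyMeasure d μ ε) ∧ (∀ x, 0 < mollifyMeasure d μ ε x) ∧
    Integrable (mollifyMeasure d μ ε) ∧ (∫ x, mollifyMeasure d μ ε x) = 1 ∧
    fisherInformation (mollifyMeasure d μ ε) ≤
      ENNReal.ofReal (ε ^ (-4 : ℤ) * ∫ y, ‖y‖ ^ 2 * gaussMollifier d ε y) ∧
    ε ^ (-4 : ℤ) * (∫ y, ‖y‖ ^ 2 * gaussMollifier d ε y) = d * ε ^ (-2 : ℤ) := by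
  let θ := gaussMollifierSchwartz d hε
  have hθ : ⇑θ = gaussMollifier d ε := coe_gaussMollifierSchwartz hε
  have hθ_pos (x) : 0 < θ x := hθ ▸ gaussMollifier_pos hε x
  have smoothing : mollifyMeasure d μ ε = fun x ↦ ∫ t, θ (x - t) ∂μ := by rw [hθ]; rfl
  rw [smoothing]
  refine ⟨contDiff_integral_schwartz_comp_sub θ, integral_schwartz_comp_sub_pos hθ_pos,
    integrable_integral_comp_sub θ.integrable, ?_, ?_, ?_⟩
  · rw [integral_integral_comp_sub θ.integrable, hθ, integral_gaussMollifier hε]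
    simp
  · simpa [hθ, fisherInformation_gaussMollifier hε] using
      fisherInformation_integral_schwartz_comp_sub_le μ hθ_pos
  · rw [integral_norm_sq_mul_gaussMollifier hε]
    field_simp

lemma isProbabilityMeasure_withDensity_ofReal {α : Type*} [MeasurableSpace α] {ν : Measure α}
    {ρ : α → ℝ} (hρ_nonneg : 0 ≤ᵐ[ν] ρ) (hρ_int : Integrable ρ ν) (hρ_mass : ∫ x, ρ x ∂ν = 1) :
    IsProbabilityMeasure (ν.withDensity fun x ↦ ENNReal.ofReal (ρ x)) := by
  refine ⟨?_⟩
  rw [withDensity_apply _ .univ, setLIntegral_univ,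
    ← ofReal_integral_eq_lintegral_ofReal hρ_int hρ_nonneg, hρ_mass, ENNReal.ofReal_one]

lemma mollify_eq_mollifyMeasure_withDensity {ρ : EuclideanSpace ℝ (Fin d) → ℝ}
    (hρ_meas : AEMeasurable ρ) (hρ_nonneg : 0 ≤ᵐ[volume] ρ) (ε : ℝ) :
    mollify d ρ ε = mollifyMeasure d (volume.withDensity fun x ↦ ENNReal.ofReal (ρ x)) ε := by
  ext x
  calc mollify d ρ ε x = ∫ t, ρ t * gaussMollifier d ε (x - t) := by
        rw [mollify, ← integral_sub_left_eq_self _ volume x]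
        simp only [sub_sub_cancel]
    _ = ∫ t, (ENNReal.ofReal (ρ t)).toReal • gaussMollifier d ε (x - t) := by
        refine integral_congr_ae (hρ_nonneg.mono fun t ht ↦ ?_)
        simp only [ENNReal.toReal_ofReal ht, smul_eq_mul]
    _ = mollifyMeasure d (volume.withDensity fun x ↦ ENNReal.ofReal (ρ x)) ε x :=
        (integral_withDensity_eq_integral_toReal_smul₀ hρ_meas.ennreal_ofReal
          (.of_forall fun _ ↦ ENNReal.ofReal_lt_top) _).symm

end Mollifier

/-- If `ρ` is a probability density on `ℝ^d` and `ε > 0`, then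
`ρ_ε = ρ * θ_ε` is a smooth, strictly positive probability density whose Fisher
information satisfies `∫ |∇ρ_ε|²/ρ_ε ≤ ε⁻⁴ ∫ |y|² θ_ε(y) dy = d ε⁻²`. -/
theorem mollify_fisher_bound (d : ℕ) (ρ : EuclideanSpace ℝ (Fin d) → ℝ) (ε : ℝ) (hε : 0 < ε)
    (hρ_meas : Measurable ρ) (hρ_nonneg : ∀ x, 0 ≤ ρ x)
    (hρ_int : Integrable ρ) (hρ_mass : ∫ x, ρ x = 1) :
    ContDiff ℝ (⊤ : ℕ∞) (mollify d ρ ε) ∧ (∀ x, 0 < mollify d ρ ε x) ∧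
    Integrable (mollify d ρ ε) ∧ (∫ x, mollify d ρ ε x) = 1 ∧
    (∫⁻ x, ENNReal.ofReal (‖gradient (mollify d ρ ε) x‖ ^ 2 / mollify d ρ ε x)) ≤
      ENNReal.ofReal (ε ^ (-4 : ℤ) * ∫ y, ‖y‖ ^ 2 * gaussMollifier d ε y) ∧
    ε ^ (-4 : ℤ) * (∫ y, ‖y‖ ^ 2 * gaussMollifier d ε y) = d * ε ^ (-2 : ℤ) := by
  have := isProbabilityMeasure_withDensity_ofReal (.of_forall hρ_nonneg) hρ_int hρ_mass
  rw [mollify_eq_mollifyMeasure_withDensity hρ_meas.aemeasurable (.of_forall hρ_nonneg)]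
  exact mollify_fisher_bound_general d _ ε hε
end

section
/- Let Ψ ∈ C²(ℝ^d) be convex, bounded from below, with ΔΨ bounded, and suppose there is a constant C > 0 such that |x| |∇Ψ(x)| ≤ C(1 + |x|²) for all x ∈ ℝ^d. Let (ρ_t)_{t∈[0,1]} be a narrowly continuous family of Borel probability measures on ℝ^d with ∫ Ψ dρ_0 < ∞, and suppose there is a finite constant J such that for every p ∈ C_c^∞(ℝ^d) and every s ∈ [0,1]: ∫ p dρ_s − ∫ p dρ_0 − ∫_0^s ∫ Δp dρ_t dt + ∫_0^s ∫ ∇Ψ · ∇p dρ_t dt − (1/2) ∫_0^s ∫ |∇p|² dρ_t dt ≤ J. Then sup_{t∈[0,1]} ∫ |Ψ| dρ_t < ∞ and ∫_0^1 ∫_{ℝ^d} |∇Ψ(x)|² ρ_t(dx) dt < ∞. -/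
open MeasureTheory
open scoped RealInnerProductSpace

/-- The Laplacian of `f : ℝ^d → ℝ`, as the sum of the pure second derivatives. -/
noncomputable def lapl {d : ℕ} (f : EuclideanSpace ℝ (Fin d) → ℝ)
    (x : EuclideanSpace ℝ (Fin d)) : ℝ :=
  ∑ i : Fin d, fderiv ℝ (fun y => fderiv ℝ f y (EuclideanSpace.single i 1)) x
    (EuclideanSpace.single i 1)

/-!
Test the rate bound against a compactly supported approximation `p` of `Ψ ≥ 0`: in the rate
integrand `-Δp + ⟨∇Ψ, ∇p⟩ - |∇p|²/2`, the choice `p = Ψ` gives `-ΔΨ + |∇Ψ|²/2`, so an upper bound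
on `ΔΨ` yields simultaneously a bound on `∫ Ψ dρ_s` and on the space-time integral of `|∇Ψ|²`.

The approximation is `p = χ_ε φ_ε(Ψ)`, with `φ_ε` concave, increasing and bounded by `1/ε`, and
`χ_ε` a cutoff of the logarithmic scale `ε log(1 + |x|²)`. Every new error term has a derivative
of `χ_ε`, which is of order `ε / (1 + |x|)`: the factor `ε` compensates the size of `φ_ε` and the
decay in `|x|` compensates the linear growth of `∇Ψ`, so the errors are bounded uniformly in `ε`.
Mollification makes `C²` test functions admissible, and Fatou's lemma removes `ε`.
-/

open Filter Set
open scoped Topology ContDiff Gradient Laplacian Convolution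

section Calculus

section ContDiffAt

variable {E F : Type*} [NormedAddCommGroup E] [NormedSpace ℝ E] [NormedAddCommGroup F]
  [NormedSpace ℝ F] {f : E → F} {x : E}

theorem differentiableAt_fderiv (hf : ContDiffAt ℝ 2 f x) : DifferentiableAt ℝ (fderiv ℝ f) x :=
  (hf.fderiv_right (m := 1) (by norm_num)).differentiableAt one_ne_zero

theorem eventually_differentiableAt (hf : ContDiffAt ℝ 2 f x) :
    ∀ᶠ y in 𝓝 x, DifferentiableAt ℝ f y :=
  (hf.eventually (by simp)).mono fun _ hy => hy.differentiableAt two_ne_zero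

end ContDiffAt

variable {E : Type*} [NormedAddCommGroup E] [InnerProductSpace ℝ E]
  {f g : E → ℝ} {φ : ℝ → ℝ} {x : E}

section Gradient

variable [CompleteSpace E]

theorem gradient_mul (hf : DifferentiableAt ℝ f x) (hg : DifferentiableAt ℝ g x) :
    ∇ (fun y => f y * g y) x = f x • ∇ g x + g x • ∇ f x := by
  simp [gradient, fderiv_fun_mul hf hg]

theorem gradient_comp (hφ : DifferentiableAt ℝ φ (f x)) (hf : DifferentiableAt ℝ f x) :
    ∇ (fun y => φ (f y)) x = deriv φ (f x) • ∇ f x := by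
  have h := (hφ.hasDerivAt.comp_hasFDerivAt x hf.hasFDerivAt).fderiv
  simpa [gradient, Function.comp_def] using congrArg (InnerProductSpace.toDual ℝ E).symm h

theorem gradient_sub_const (f : E → ℝ) (c : ℝ) : ∇ (fun y => f y - c) = ∇ f := by
  funext x
  simp [gradient, fderiv_sub_const]

theorem gradient_norm_sq (x : E) : ∇ (fun y : E => ‖y‖ ^ 2) x = (2 : ℝ) • x := by
  refine ext_inner_right ℝ fun v => ?_
  rw [inner_gradient_left, (hasStrictFDerivAt_norm_sq x).hasFDerivAt.fderiv]
  simp [two_smul, inner_add_left]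

theorem continuous_gradient (hf : ContDiff ℝ 1 f) : Continuous (∇ f) :=
  (InnerProductSpace.toDual ℝ E).symm.continuous.comp (hf.continuous_fderiv one_ne_zero)

theorem norm_gradient_sub_gradient (f g : E → ℝ) (x : E) :
    ‖∇ f x - ∇ g x‖ = ‖fderiv ℝ f x - fderiv ℝ g x‖ := by
  rw [gradient, gradient, ← map_sub, LinearIsometryEquiv.norm_map]

end Gradient

section Laplacian

variable [FiniteDimensional ℝ E]

theorem laplacian_eq_sum_fderiv_fderiv {ι : Type*} [Fintype ι] (v : OrthonormalBasis ι ℝ E)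
    (f : E → ℝ) (x : E) : (Δ f) x = ∑ i, fderiv ℝ (fderiv ℝ f) x (v i) (v i) := by
  simp [InnerProductSpace.laplacian_eq_iteratedFDeriv_orthonormalBasis f v,
    iteratedFDeriv_two_apply]

theorem continuous_laplacian (hf : ContDiff ℝ 2 f) : Continuous (Δ f) := by
  have _ : Continuous (iteratedFDeriv ℝ 2 f) := hf.continuous_iteratedFDeriv le_rfl
  rw [InnerProductSpace.laplacian_eq_iteratedFDeriv_stdOrthonormalBasis]
  fun_prop

theorem laplacian_sub_const (hf : ContDiff ℝ 2 f) (c : ℝ) : Δ (fun y => f y - c) = Δ f := by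
  funext x
  simpa [Pi.sub_def] using hf.contDiffAt.laplacian_sub (x := x) (contDiffAt_const (c := c))

theorem laplacian_mul (hf : ContDiffAt ℝ 2 f x) (hg : ContDiffAt ℝ 2 g x) :
    (Δ fun y => f y * g y) x = f x * (Δ g) x + g x * (Δ f) x + 2 * ⟪∇ f x, ∇ g x⟫ := by
  have hfderiv : fderiv ℝ (fun y => f y * g y)
      =ᶠ[𝓝 x] fun y => f y • fderiv ℝ g y + g y • fderiv ℝ f y := by
    filter_upwards [eventually_differentiableAt hf, eventually_differentiableAt hg]
      with y hfy hgy using fderiv_fun_mul hfy hgy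
  have hf₁ := hf.differentiableAt two_ne_zero
  have hg₁ := hg.differentiableAt two_ne_zero
  have hf₂ := differentiableAt_fderiv hf
  have hg₂ := differentiableAt_fderiv hg
  let v := stdOrthonormalBasis ℝ E
  simp only [laplacian_eq_sum_fderiv_fderiv v, ← v.sum_inner_mul_inner (∇ f x) (∇ g x),
    Finset.mul_sum, ← Finset.sum_add_distrib]
  refine Finset.sum_congr rfl fun i _ => ?_
  rw [hfderiv.fderiv_eq, fderiv_fun_add (hf₁.fun_smul hg₂) (hg₁.fun_smul hf₂),
    fderiv_fun_smul hf₁ hg₂, fderiv_fun_smul hg₁ hf₂, inner_gradient_left, inner_gradient_right]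
  simp
  ring

theorem laplacian_comp (hφ : ContDiffAt ℝ 2 φ (f x)) (hf : ContDiffAt ℝ 2 f x) :
    (Δ fun y => φ (f y)) x
      = deriv (deriv φ) (f x) * ‖∇ f x‖ ^ 2 + deriv φ (f x) * (Δ f) x := by
  have hfderiv : fderiv ℝ (fun y => φ (f y)) =ᶠ[𝓝 x] fun y => deriv φ (f y) • fderiv ℝ f y := by
    filter_upwards [hf.continuousAt.eventually (eventually_differentiableAt hφ),
      eventually_differentiableAt hf] with y hφy hfy
      using (hφy.hasDerivAt.comp_hasFDerivAt y hfy.hasFDerivAt).fderiv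
  have hf₁ := hf.differentiableAt two_ne_zero
  have hφ₂ : HasDerivAt (deriv φ) (deriv (deriv φ) (f x)) (f x) :=
    ((hφ.derivWithin (m := 1) (by norm_num)).differentiableAt one_ne_zero).hasDerivAt
  have hφf : HasFDerivAt (fun y => deriv φ (f y)) (deriv (deriv φ) (f x) • fderiv ℝ f x) x :=
    hφ₂.comp_hasFDerivAt x hf₁.hasFDerivAt
  let v := stdOrthonormalBasis ℝ E
  simp only [laplacian_eq_sum_fderiv_fderiv v, ← real_inner_self_eq_norm_sq,
    ← v.sum_inner_mul_inner (∇ f x) (∇ f x), Finset.mul_sum, ← Finset.sum_add_distrib]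
  refine Finset.sum_congr rfl fun i _ => ?_
  rw [hfderiv.fderiv_eq, (hφf.fun_smul (differentiableAt_fderiv hf).hasFDerivAt).fderiv,
    inner_gradient_left, inner_gradient_right]
  simp
  ring

theorem laplacian_norm_sq (x : E) :
    (Δ fun y : E => ‖y‖ ^ 2) x = (2 * Module.finrank ℝ E : ℝ) := by
  have hfderiv : fderiv ℝ (fun y : E => ‖y‖ ^ 2) = ((2 : ℝ) • innerSL ℝ : E →L[ℝ] E →L[ℝ] ℝ) := by
    funext y
    simp [(hasStrictFDerivAt_norm_sq y).hasFDerivAt.fderiv, two_smul]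
  let v := stdOrthonormalBasis ℝ E
  calc (Δ fun y : E => ‖y‖ ^ 2) x = ∑ i, 2 * ⟪v i, v i⟫ := by
        rw [laplacian_eq_sum_fderiv_fderiv v, hfderiv, ContinuousLinearMap.fderiv]
        rfl
    _ = _ := by simp [mul_comm]

theorem abs_laplacian_sub_laplacian_le (f g : E → ℝ) (x : E) :
    |(Δ f) x - (Δ g) x|
      ≤ Module.finrank ℝ E * ‖fderiv ℝ (fderiv ℝ f) x - fderiv ℝ (fderiv ℝ g) x‖ := by
  let v := stdOrthonormalBasis ℝ E
  rw [laplacian_eq_sum_fderiv_fderiv v, laplacian_eq_sum_fderiv_fderiv v,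
    ← Finset.sum_sub_distrib]
  calc _ ≤ ∑ i, |fderiv ℝ (fderiv ℝ f) x (v i) (v i) - fderiv ℝ (fderiv ℝ g) x (v i) (v i)| :=
        Finset.abs_sum_le_sum_abs _ _
    _ ≤ ∑ _i : Fin (Module.finrank ℝ E),
          ‖fderiv ℝ (fderiv ℝ f) x - fderiv ℝ (fderiv ℝ g) x‖ := by
        refine Finset.sum_le_sum fun i _ => ?_
        simpa using (fderiv ℝ (fderiv ℝ f) x - fderiv ℝ (fderiv ℝ g) x).le_opNorm₂ (v i) (v i)
    _ = _ := by simp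

end Laplacian

end Calculus

section Mollification

variable {E F : Type*} [NormedAddCommGroup E] [NormedSpace ℝ E] [FiniteDimensional ℝ E]
  [NormedAddCommGroup F] [NormedSpace ℝ F] {f : E → F}

section HaarMeasure

variable [MeasurableSpace E] [BorelSpace E] {μ : Measure E} [μ.IsAddHaarMeasure]

theorem fderiv_normed_convolution (b : ContDiffBump (0 : E)) (hf : ContDiff ℝ 1 f)
    (hfc : HasCompactSupport f) :
    fderiv ℝ (b.normed μ ⋆[ContinuousLinearMap.lsmul ℝ ℝ, μ] f)
      = b.normed μ ⋆[ContinuousLinearMap.lsmul ℝ ℝ, μ] fderiv ℝ f := by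
  funext x
  rw [(hfc.hasFDerivAt_convolution_right _ b.continuous_normed.locallyIntegrable hf x).fderiv]
  rfl

theorem eventually_norm_normed_convolution_sub_le [CompleteSpace F] (hf : Continuous f)
    (hfc : HasCompactSupport f) {δ : ℝ} (hδ : 0 < δ) :
    ∀ᶠ r in 𝓝[>] 0, ∀ b : ContDiffBump (0 : E), b.rOut = r →
      ∀ x, ‖(b.normed μ ⋆[ContinuousLinearMap.lsmul ℝ ℝ, μ] f) x - f x‖ ≤ δ := by
  obtain ⟨r₀, hr₀, hfδ⟩ := Metric.uniformContinuous_iff.1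
    (hf.uniformContinuous_of_tendsto_cocompact hfc.is_zero_at_infty) δ hδ
  filter_upwards [Ioc_mem_nhdsGT hr₀] with r hr b hb x
  rw [← dist_eq_norm]
  exact b.dist_normed_convolution_le hf.aestronglyMeasurable
    fun y hy => (hfδ (hy.trans_le (hb.trans_le hr.2))).le

end HaarMeasure

theorem exists_contDiff_approx [CompleteSpace F] (hf : ContDiff ℝ 2 f)
    (hfc : HasCompactSupport f) {δ : ℝ} (hδ : 0 < δ) :
    ∃ g : E → F, ContDiff ℝ ∞ g ∧ HasCompactSupport g ∧
      tsupport g ⊆ Metric.cthickening 1 (tsupport f) ∧ (∀ x, ‖g x - f x‖ ≤ δ) ∧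
      (∀ x, ‖fderiv ℝ g x - fderiv ℝ f x‖ ≤ δ) ∧
      ∀ x, ‖fderiv ℝ (fderiv ℝ g) x - fderiv ℝ (fderiv ℝ f) x‖ ≤ δ := by
  borelize E
  let μ : Measure E := Measure.addHaar
  have hf₁ : ContDiff ℝ 1 (fderiv ℝ f) := hf.fderiv_right (by norm_num)
  have hfc₁ : HasCompactSupport (fderiv ℝ f) := hfc.fderiv ℝ
  obtain ⟨r, h₀, h₁, h₂, hr⟩ :=
    ((eventually_norm_normed_convolution_sub_le (μ := μ) hf.continuous hfc hδ).and <|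
      (eventually_norm_normed_convolution_sub_le (μ := μ) hf₁.continuous hfc₁ hδ).and <|
      (eventually_norm_normed_convolution_sub_le (μ := μ)
        (hf₁.continuous_fderiv one_ne_zero) (hfc₁.fderiv ℝ) hδ).and <|
      Ioc_mem_nhdsGT one_pos).exists
  let b : ContDiffBump (0 : E) := ⟨r / 2, r, half_pos hr.1, half_lt_self hr.1⟩
  have hg' := fderiv_normed_convolution (μ := μ) b (hf.of_le one_le_two) hfc
  have hg'' := fderiv_normed_convolution (μ := μ) b hf₁ hfc₁
  refine ⟨b.normed μ ⋆[ContinuousLinearMap.lsmul ℝ ℝ, μ] f,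
    b.hasCompactSupport_normed.contDiff_convolution_left _ b.contDiff_normed
      hf.continuous.locallyIntegrable,
    b.hasCompactSupport_normed.convolution _ hfc, ?_, h₀ b rfl, ?_, ?_⟩
  · refine closure_minimal (fun x hx => ?_) Metric.isClosed_cthickening
    by_contra hxf
    refine hx ?_
    have hf_zero : ∀ y ∈ Metric.ball x b.rOut, f y = 0 := fun y hy => by
      by_contra hy₀
      refine hxf (Metric.mem_cthickening_of_dist_le x y _ _ (subset_tsupport f hy₀) ?_)
      exact (Metric.mem_ball'.1 hy).le.trans hr.2
    rw [b.normed_convolution_eq_right fun y hy => ?_, hf_zero x (Metric.mem_ball_self hr.1)]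
    rw [hf_zero y hy, hf_zero x (Metric.mem_ball_self hr.1)]
  · exact fun x => hg' ▸ h₁ b rfl x
  · exact fun x => hg' ▸ hg'' ▸ h₂ b rfl x

end Mollification

section RateIntegrand

variable {E : Type*} [NormedAddCommGroup E] [InnerProductSpace ℝ E]

theorem half_mul_norm_sq_add_le_inner_sub {a : ℝ} (ha₀ : 0 ≤ a) (ha₁ : a ≤ 1) (b : ℝ) (v w : E) :
    a / 2 * ‖v‖ ^ 2 + b * (1 - a) * ⟪v, w⟫ - b ^ 2 / 2 * ‖w‖ ^ 2
      ≤ ⟪v, a • v + b • w⟫ - 1 / 2 * ‖a • v + b • w‖ ^ 2 := by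
  rw [norm_add_sq_real, inner_add_right, norm_smul, norm_smul, mul_pow, mul_pow,
    real_inner_smul_left, real_inner_smul_right, real_inner_smul_right,
    real_inner_self_eq_norm_sq, Real.norm_eq_abs, Real.norm_eq_abs, sq_abs, sq_abs]
  have ha : 0 ≤ a * (1 - a) * ‖v‖ ^ 2 := by have := sub_nonneg.2 ha₁; positivity
  linear_combination ha / 2

variable [FiniteDimensional ℝ E] {Ψ p q χ : E → ℝ} {φ : ℝ → ℝ} {x : E}

/-- The integrand `-Δp + ⟨∇Ψ, ∇p⟩ - |∇p|²/2` whose space-time integral is the part of the weak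
rate-functional bound that does not come from the endpoints. -/
noncomputable def rateIntegrand (Ψ p : E → ℝ) (x : E) : ℝ :=
  -(Δ p) x + ⟪∇ Ψ x, ∇ p x⟫ - 1 / 2 * ‖∇ p x‖ ^ 2

theorem continuous_rateIntegrand (hΨ : ContDiff ℝ 1 Ψ) (hp : ContDiff ℝ 2 p) :
    Continuous (rateIntegrand Ψ p) := by
  have hΔp := continuous_laplacian hp
  have hgradp := continuous_gradient (hp.of_le one_le_two)
  have hgradΨ := continuous_gradient hΨ
  unfold rateIntegrand
  fun_prop

theorem rateIntegrand_sub_const (Ψ p : E → ℝ) (c : ℝ) :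
    rateIntegrand (fun x => Ψ x - c) p = rateIntegrand Ψ p := by
  funext x
  rw [rateIntegrand, rateIntegrand, gradient_sub_const]

theorem gradient_eq_zero_of_notMem_tsupport (hx : x ∉ tsupport p) : ∇ p x = 0 := by
  rw [(notMem_tsupport_iff_eventuallyEq.1 hx).gradient_eq]
  exact gradient_const x 0

theorem laplacian_eq_zero_of_notMem_tsupport (hx : x ∉ tsupport p) : (Δ p) x = 0 := by
  rw [(InnerProductSpace.laplacian_congr_nhds
    (notMem_tsupport_iff_eventuallyEq.1 hx)).self_of_nhds]
  simp [laplacian_eq_sum_fderiv_fderiv (stdOrthonormalBasis ℝ E)]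

theorem rateIntegrand_eq_zero_of_notMem_tsupport (hx : x ∉ tsupport p) :
    rateIntegrand Ψ p x = 0 := by
  simp [rateIntegrand, gradient_eq_zero_of_notMem_tsupport hx,
    laplacian_eq_zero_of_notMem_tsupport hx]

theorem hasCompactSupport_rateIntegrand (hp : HasCompactSupport p) :
    HasCompactSupport (rateIntegrand Ψ p) :=
  HasCompactSupport.intro hp fun _ hx => rateIntegrand_eq_zero_of_notMem_tsupport hx

theorem abs_rateIntegrand_sub_le (Ψ p q : E → ℝ) (x : E) :
    |rateIntegrand Ψ q x - rateIntegrand Ψ p x|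
      ≤ |(Δ q) x - (Δ p) x|
        + (‖∇ Ψ x‖ + (‖∇ q x‖ + ‖∇ p x‖) / 2) * ‖∇ q x - ∇ p x‖ := by
  have hinner : |⟪∇ Ψ x, ∇ q x - ∇ p x⟫| ≤ ‖∇ Ψ x‖ * ‖∇ q x - ∇ p x‖ :=
    abs_real_inner_le_norm _ _
  have hsq : |‖∇ q x‖ ^ 2 - ‖∇ p x‖ ^ 2| ≤ (‖∇ q x‖ + ‖∇ p x‖) * ‖∇ q x - ∇ p x‖ := by
    rw [sq_sub_sq, abs_mul, abs_of_nonneg (by positivity)]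
    gcongr
    exact abs_norm_sub_norm_le _ _
  rw [inner_sub_right] at hinner
  unfold rateIntegrand
  have hΔ := le_refl |(Δ q) x - (Δ p) x|
  rw [abs_le] at *
  constructor <;> linarith

theorem exists_contDiff_rateIntegrand_approx (hΨ : ContDiff ℝ 1 Ψ) (hp : ContDiff ℝ 2 p)
    (hpc : HasCompactSupport p) {δ : ℝ} (hδ : 0 < δ) :
    ∃ q : E → ℝ, ContDiff ℝ ∞ q ∧ HasCompactSupport q ∧
      ∀ x, |q x - p x| ≤ δ ∧ |rateIntegrand Ψ q x - rateIntegrand Ψ p x| ≤ δ := by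
  have hK : IsCompact (Metric.cthickening 1 (tsupport p)) := hpc.isCompact.cthickening
  obtain ⟨M, hM⟩ := hK.exists_bound_of_continuousOn
    ((continuous_gradient hΨ).norm.add
      (continuous_gradient (hp.of_le one_le_two)).norm).continuousOn
  let n : ℝ := Module.finrank ℝ E
  have hD : 0 < n + |M| + 1 := by positivity
  let η := min (min 1 δ) (δ / (n + |M| + 1))
  have hη₀ : 0 < η := lt_min (lt_min one_pos hδ) (div_pos hδ hD)
  have hη₁ : η ≤ 1 := (min_le_left _ _).trans (min_le_left _ _)
  have hη₂ : η ≤ δ := (min_le_left _ _).trans (min_le_right _ _)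
  have hη : (n + |M| + 1) * η ≤ δ := (le_div_iff₀' hD).1 (min_le_right _ _)
  obtain ⟨q, hq, hqc, hqK, hqp, hDqp, hDDqp⟩ := exists_contDiff_approx hp hpc hη₀
  refine ⟨q, hq, hqc, fun x => ⟨(hqp x).trans hη₂, ?_⟩⟩
  by_cases hx : x ∈ Metric.cthickening 1 (tsupport p)
  · have hΔ : |(Δ q) x - (Δ p) x| ≤ n * η :=
      (abs_laplacian_sub_laplacian_le q p x).trans (by gcongr; exact hDDqp x)
    have hgrad : ‖∇ q x - ∇ p x‖ ≤ η := (norm_gradient_sub_gradient q p x).trans_le (hDqp x)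
    have hfactor : ‖∇ Ψ x‖ + (‖∇ q x‖ + ‖∇ p x‖) / 2 ≤ |M| + 1 := by
      have hsum : ‖∇ Ψ x‖ + ‖∇ p x‖ ≤ |M| := (le_abs_self _).trans ((hM x hx).trans (le_abs_self M))
      linarith [norm_le_norm_add_norm_sub' (∇ q x) (∇ p x)]
    calc _ ≤ _ := abs_rateIntegrand_sub_le Ψ p q x
      _ ≤ n * η + (|M| + 1) * η := by gcongr
      _ ≤ δ := by linarith
  · rw [rateIntegrand_eq_zero_of_notMem_tsupport fun hxq => hx (hqK hxq),
      rateIntegrand_eq_zero_of_notMem_tsupport fun hxp =>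
        hx (Metric.self_subset_cthickening _ hxp)]
    simpa using hδ.le

theorem le_rateIntegrand_mul_comp {L : ℝ} (hχ : ContDiffAt ℝ 2 χ x) (hφ : ContDiffAt ℝ 2 φ (Ψ x))
    (hΨ : ContDiffAt ℝ 2 Ψ x) (hχ₀ : 0 ≤ χ x) (hχ₁ : χ x ≤ 1) (hφ'₀ : 0 ≤ deriv φ (Ψ x))
    (hφ'₁ : deriv φ (Ψ x) ≤ 1) (hφ'' : deriv (deriv φ) (Ψ x) ≤ 0) (hL : 0 ≤ L)
    (hΔΨ : (Δ Ψ) x ≤ L) :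
    χ x * deriv φ (Ψ x) / 2 * ‖∇ Ψ x‖ ^ 2
        - (L + |φ (Ψ x)| * |(Δ χ) x| + (2 + |φ (Ψ x)|) * (‖∇ χ x‖ * ‖∇ Ψ x‖)
          + φ (Ψ x) ^ 2 / 2 * ‖∇ χ x‖ ^ 2)
      ≤ rateIntegrand Ψ (fun y => χ y * φ (Ψ y)) x := by
  have hφΨ : ContDiffAt ℝ 2 (fun y => φ (Ψ y)) x := hφ.comp x hΨ
  have hχ' := hχ.differentiableAt two_ne_zero
  have hφ' := hφ.differentiableAt two_ne_zero
  have hΨ' := hΨ.differentiableAt two_ne_zero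
  rw [rateIntegrand, laplacian_mul hχ hφΨ, laplacian_comp hφ hΨ,
    gradient_mul hχ' (hφΨ.differentiableAt two_ne_zero), gradient_comp hφ' hΨ', smul_smul,
    real_inner_smul_right]
  set a := deriv φ (Ψ x)
  set b := φ (Ψ x)
  have hχa₀ : 0 ≤ χ x * a := by positivity
  have hχa₁ : χ x * a ≤ 1 := mul_le_one₀ hχ₁ hφ'₀ hφ'₁
  have hquad := half_mul_norm_sq_add_le_inner_sub hχa₀ hχa₁ b (∇ Ψ x) (∇ χ x)
  have hφ''_term : χ x * deriv (deriv φ) (Ψ x) * ‖∇ Ψ x‖ ^ 2 ≤ 0 :=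
    mul_nonpos_of_nonpos_of_nonneg (mul_nonpos_of_nonneg_of_nonpos hχ₀ hφ'') (by positivity)
  have hΔΨ_term : χ x * a * (Δ Ψ) x ≤ L := by
    nlinarith
  have hΔχ_term : b * (Δ χ) x ≤ |b| * |(Δ χ) x| := (le_abs_self _).trans (abs_mul _ _).le
  have hcross_term : (2 * a - b * (1 - χ x * a)) * ⟪∇ Ψ x, ∇ χ x⟫
      ≤ (2 + |b|) * (‖∇ χ x‖ * ‖∇ Ψ x‖) := by
    refine (le_abs_self _).trans ?_
    rw [abs_mul, mul_comm ‖∇ χ x‖]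
    gcongr
    · refine (abs_sub _ _).trans ?_
      rw [abs_mul b, abs_of_nonneg (mul_nonneg zero_le_two hφ'₀),
        abs_of_nonneg (sub_nonneg.2 hχa₁)]
      nlinarith [abs_nonneg b]
    · exact abs_real_inner_le_norm _ _
  rw [real_inner_comm (∇ Ψ x)]
  linarith

end RateIntegrand

section ProbabilityFlow

variable {E : Type*} [NormedAddCommGroup E] [MeasurableSpace E]

/-- A family of probability measures indexed by `[0, T]` that depends measurably on time, in the
weak sense of integrals of compactly supported continuous functions. -/
structure IsProbabilityFlow (ρ : ℝ → Measure E) (T : ℝ) : Prop where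
  isProbabilityMeasure : ∀ t ∈ Icc 0 T, IsProbabilityMeasure (ρ t)
  aestronglyMeasurable_integral : ∀ f : E → ℝ, Continuous f → HasCompactSupport f →
    AEStronglyMeasurable (fun t => ∫ x, f x ∂ρ t) (volume.restrict (Icc 0 T))

theorem isProbabilityFlow_of_continuousOn {ρ : ℝ → Measure E} {T : ℝ}
    (hprob : ∀ t ∈ Icc 0 T, IsProbabilityMeasure (ρ t))
    (hnarrow : ∀ φ : BoundedContinuousFunction E ℝ,
      ContinuousOn (fun t => ∫ x, φ x ∂ρ t) (Icc 0 T)) :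
    IsProbabilityFlow ρ T where
  isProbabilityMeasure := hprob
  aestronglyMeasurable_integral f hf hfc := by
    obtain ⟨M, hM⟩ := hf.bounded_above_of_compact_support hfc
    exact (hnarrow (.ofNormedAddCommGroup f hf M hM)).aestronglyMeasurable measurableSet_Icc

namespace IsProbabilityFlow

variable {ρ : ℝ → Measure E} {T s t : ℝ} {f g : E → ℝ}

theorem intervalIntegrable_integral (hρ : IsProbabilityFlow ρ T) (hs : s ∈ Icc 0 T)
    (hf : Continuous f) (hfc : HasCompactSupport f) :
    IntervalIntegrable (fun t => ∫ x, f x ∂ρ t) volume 0 s := by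
  obtain ⟨M, hM⟩ := hf.bounded_above_of_compact_support hfc
  have hsub : Ioc 0 s ⊆ Icc 0 T := Ioc_subset_Icc_self.trans (Icc_subset_Icc_right hs.2)
  rw [intervalIntegrable_iff_integrableOn_Ioc_of_le hs.1]
  refine Integrable.of_bound
    ((hρ.aestronglyMeasurable_integral f hf hfc).mono_measure (Measure.restrict_mono hsub le_rfl))
    M ((ae_restrict_mem measurableSet_Ioc).mono fun t ht => ?_)
  have := hρ.isProbabilityMeasure t (hsub ht)
  simpa using norm_integral_le_of_norm_le_const (μ := ρ t) (.of_forall hM)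

variable [BorelSpace E]

theorem integrable (hρ : IsProbabilityFlow ρ T) (ht : t ∈ Icc 0 T) (hf : Continuous f)
    (hfc : HasCompactSupport f) : Integrable f (ρ t) := by
  have := hρ.isProbabilityMeasure t ht
  exact hf.integrable_of_hasCompactSupport hfc

theorem integral_le_integral_add (hρ : IsProbabilityFlow ρ T) (ht : t ∈ Icc 0 T)
    (hf : Continuous f) (hfc : HasCompactSupport f) (hg : Continuous g)
    (hgc : HasCompactSupport g) {K : ℝ} (hfg : ∀ x, f x ≤ g x + K) :
    ∫ x, f x ∂ρ t ≤ ∫ x, g x ∂ρ t + K := by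
  have := hρ.isProbabilityMeasure t ht
  have hg_int := hρ.integrable ht hg hgc
  calc ∫ x, f x ∂ρ t ≤ ∫ x, (g x + K) ∂ρ t :=
        integral_mono (hρ.integrable ht hf hfc) (hg_int.add (integrable_const K)) hfg
    _ = ∫ x, g x ∂ρ t + K := by rw [integral_add hg_int (integrable_const K)]; simp

theorem intervalIntegral_integral_add (hρ : IsProbabilityFlow ρ T) (hs : s ∈ Icc 0 T)
    (hf : Continuous f) (hfc : HasCompactSupport f) (hg : Continuous g)
    (hgc : HasCompactSupport g) :
    ∫ t in 0..s, ∫ x, (f + g) x ∂ρ t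
      = (∫ t in 0..s, ∫ x, f x ∂ρ t) + ∫ t in 0..s, ∫ x, g x ∂ρ t := by
  rw [← intervalIntegral.integral_add (hρ.intervalIntegrable_integral hs hf hfc)
    (hρ.intervalIntegrable_integral hs hg hgc)]
  refine intervalIntegral.integral_congr fun t ht => ?_
  rw [uIcc_of_le hs.1] at ht
  have htT : t ∈ Icc 0 T := ⟨ht.1, ht.2.trans hs.2⟩
  exact integral_add (hρ.integrable htT hf hfc) (hρ.integrable htT hg hgc)

theorem intervalIntegral_le_intervalIntegral_add (hρ : IsProbabilityFlow ρ T) (hs : s ∈ Icc 0 T)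
    (hf : Continuous f) (hfc : HasCompactSupport f) (hg : Continuous g)
    (hgc : HasCompactSupport g) {K : ℝ} (hfg : ∀ x, f x ≤ g x + K) :
    ∫ t in 0..s, ∫ x, f x ∂ρ t ≤ (∫ t in 0..s, ∫ x, g x ∂ρ t) + K * s := by
  have hg_int := hρ.intervalIntegrable_integral hs hg hgc
  calc ∫ t in 0..s, ∫ x, f x ∂ρ t ≤ ∫ t in 0..s, (∫ x, g x ∂ρ t + K) :=
        intervalIntegral.integral_mono_on hs.1 (hρ.intervalIntegrable_integral hs hf hfc)
          (hg_int.add intervalIntegrable_const) fun t ht =>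
            hρ.integral_le_integral_add ⟨ht.1, ht.2.trans hs.2⟩ hf hfc hg hgc hfg
    _ = (∫ t in 0..s, ∫ x, g x ∂ρ t) + K * s := by
        rw [intervalIntegral.integral_add hg_int intervalIntegrable_const]
        simp [mul_comm]

end IsProbabilityFlow

end ProbabilityFlow

section WeakRateBound

variable {E : Type*} [NormedAddCommGroup E] [InnerProductSpace ℝ E] [FiniteDimensional ℝ E]
  [MeasurableSpace E] {Ψ p h : E → ℝ} {ρ : ℝ → Measure E} {T J s K : ℝ}

/-- The weak form of `4 J̃₁(ρ) ≤ J` on `[0, T]`, tested against the compactly supported functions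
of class `C^n`. -/
def WeakRateBound (n : WithTop ℕ∞) (Ψ : E → ℝ) (ρ : ℝ → Measure E) (T J : ℝ) : Prop :=
  ∀ p : E → ℝ, ContDiff ℝ n p → HasCompactSupport p → ∀ s ∈ Icc 0 T,
    ∫ x, p x ∂ρ s - ∫ x, p x ∂ρ 0 + ∫ t in 0..s, ∫ x, rateIntegrand Ψ p x ∂ρ t ≤ J

theorem intervalIntegral_rateIntegrand [BorelSpace E] (hρ : IsProbabilityFlow ρ T)
    (hΨ : ContDiff ℝ 1 Ψ) (hp : ContDiff ℝ 2 p) (hpc : HasCompactSupport p) (hs : s ∈ Icc 0 T) :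
    ∫ t in 0..s, ∫ x, rateIntegrand Ψ p x ∂ρ t
      = -(∫ t in 0..s, ∫ x, (Δ p) x ∂ρ t) + (∫ t in 0..s, ∫ x, ⟪∇ Ψ x, ∇ p x⟫ ∂ρ t)
        - 1 / 2 * ∫ t in 0..s, ∫ x, ‖∇ p x‖ ^ 2 ∂ρ t := by
  have hgradp := continuous_gradient (hp.of_le one_le_two)
  have hΔ : Continuous fun x => -1 * (Δ p) x := (continuous_laplacian hp).const_mul _
  have hdrift : Continuous fun x => ⟪∇ Ψ x, ∇ p x⟫ := (continuous_gradient hΨ).inner hgradp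
  have hsq : Continuous fun x => -(1 / 2) * ‖∇ p x‖ ^ 2 := (hgradp.norm.pow 2).const_mul _
  have hΔc : HasCompactSupport fun x => -1 * (Δ p) x :=
    HasCompactSupport.intro hpc fun x hx => by simp [laplacian_eq_zero_of_notMem_tsupport hx]
  have hdriftc : HasCompactSupport fun x => ⟪∇ Ψ x, ∇ p x⟫ :=
    HasCompactSupport.intro hpc fun x hx => by simp [gradient_eq_zero_of_notMem_tsupport hx]
  have hsqc : HasCompactSupport fun x => -(1 / 2) * ‖∇ p x‖ ^ 2 :=
    HasCompactSupport.intro hpc fun x hx => by simp [gradient_eq_zero_of_notMem_tsupport hx]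
  have hrate : rateIntegrand Ψ p
      = (fun x => -1 * (Δ p) x) + (fun x => ⟪∇ Ψ x, ∇ p x⟫)
        + fun x => -(1 / 2) * ‖∇ p x‖ ^ 2 := by
    funext x
    simp only [rateIntegrand, Pi.add_apply]
    ring
  rw [hrate, hρ.intervalIntegral_integral_add hs (hΔ.add hdrift) (hΔc.add hdriftc) hsq hsqc,
    hρ.intervalIntegral_integral_add hs hΔ hΔc hdrift hdriftc]
  simp_rw [integral_const_mul, intervalIntegral.integral_const_mul]
  ring

theorem weakRateBound_two_of_infty [BorelSpace E] (hρ : IsProbabilityFlow ρ T)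
    (hΨ : ContDiff ℝ 1 Ψ) (hJ : WeakRateBound ∞ Ψ ρ T J) : WeakRateBound 2 Ψ ρ T J := by
  intro p hp hpc s hs
  have h0 : 0 ∈ Icc 0 T := ⟨le_rfl, hs.1.trans hs.2⟩
  refine le_of_forall_pos_le_add fun δ hδ => ?_
  have hs₂ : 0 < 2 + s := by linarith [hs.1]
  obtain ⟨q, hq, hqc, hqp⟩ := exists_contDiff_rateIntegrand_approx hΨ hp hpc (div_pos hδ hs₂)
  set η := δ / (2 + s)
  have hend := hρ.integral_le_integral_add hs hp.continuous hpc hq.continuous hqc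
    (K := η) fun x => by linarith [(abs_le.1 (hqp x).1).1]
  have hstart := hρ.integral_le_integral_add h0 hq.continuous hqc hp.continuous hpc
    (K := η) fun x => by linarith [(abs_le.1 (hqp x).1).2]
  have hrate := hρ.intervalIntegral_le_intervalIntegral_add hs (continuous_rateIntegrand hΨ hp)
    (hasCompactSupport_rateIntegrand hpc)
    (continuous_rateIntegrand hΨ (contDiff_infty.1 hq 2))
    (hasCompactSupport_rateIntegrand hqc) (K := η) fun x => by linarith [(abs_le.1 (hqp x).2).1]
  have hη : 2 * η + η * s = δ := by rw [mul_comm 2, ← mul_add]; exact div_mul_cancel₀ δ hs₂.ne'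
  linarith [hJ q hq hqc s hs]

theorem WeakRateBound.integral_add_half_intervalIntegral_le [BorelSpace E]
    (hJ : WeakRateBound 2 Ψ ρ T J) (hρ : IsProbabilityFlow ρ T) (hΨ : ContDiff ℝ 1 Ψ)
    (hp : ContDiff ℝ 2 p) (hpc : HasCompactSupport p) (hh : Continuous h)
    (hhc : HasCompactSupport h) (hK : 0 ≤ K) (hhp : ∀ x, 1 / 2 * h x - K ≤ rateIntegrand Ψ p x)
    (hs : s ∈ Icc 0 T) :
    ∫ x, p x ∂ρ s + 1 / 2 * ∫ t in 0..s, ∫ x, h x ∂ρ t ≤ J + ∫ x, p x ∂ρ 0 + K * T := by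
  have hrate := hρ.intervalIntegral_le_intervalIntegral_add hs (hh.const_mul (1 / 2)) hhc.mul_left
    (continuous_rateIntegrand hΨ hp) (hasCompactSupport_rateIntegrand hpc)
    fun x => sub_le_iff_le_add.1 (hhp x)
  simp_rw [integral_const_mul, intervalIntegral.integral_const_mul] at hrate
  have hKs : K * s ≤ K * T := mul_le_mul_of_nonneg_left hs.2 hK
  linarith [hJ p hp hpc s hs]

end WeakRateBound

section LogCutoff

/-- A smooth one-dimensional bump, equal to `1` on `[-1, 1]` and supported in `[-2, 2]`, from which
the logarithmic cutoffs are built. -/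
noncomputable def cutoffProfile : ContDiffBump (0 : ℝ) :=
  ⟨1, 2, one_pos, one_lt_two⟩

theorem exists_bound_deriv_cutoffProfile :
    ∃ B : ℝ, ∀ u, |deriv cutoffProfile u| ≤ B ∧ |deriv (deriv cutoffProfile) u| ≤ B := by
  have hc : HasCompactSupport (deriv cutoffProfile) := cutoffProfile.hasCompactSupport.deriv
  have hb : ContDiff ℝ 2 cutoffProfile := cutoffProfile.contDiff
  have hb' : ContDiff ℝ 1 (deriv cutoffProfile) := hb.deriv'
  obtain ⟨B₁, hB₁⟩ := hb'.continuous.bounded_above_of_compact_support hc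
  obtain ⟨B₂, hB₂⟩ := hb'.continuous_deriv_one.bounded_above_of_compact_support hc.deriv
  exact ⟨max B₁ B₂, fun u => ⟨(hB₁ u).trans (le_max_left _ _), (hB₂ u).trans (le_max_right _ _)⟩⟩

/-- A cutoff equal to `1` where `log (1 + ‖x‖²) ≤ 1 / ε`. Cutting off on a logarithmic scale makes
its gradient of order `ε / (1 + ‖x‖)`, small enough to be paired with a drift of linear growth. -/
noncomputable def logCutoff {E : Type*} [NormedAddCommGroup E] (ε : ℝ) (x : E) : ℝ :=
  cutoffProfile (ε * Real.log (1 + ‖x‖ ^ 2))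

section Norm

variable {E : Type*} [NormedAddCommGroup E]

theorem logCutoff_nonneg (ε : ℝ) (x : E) : 0 ≤ logCutoff ε x :=
  cutoffProfile.nonneg

theorem logCutoff_le_one (ε : ℝ) (x : E) : logCutoff ε x ≤ 1 :=
  cutoffProfile.le_one

theorem tendsto_logCutoff (x : E) : Tendsto (fun ε => logCutoff ε x) (𝓝 0) (𝓝 1) := by
  have hcont : Continuous fun ε => logCutoff ε x :=
    cutoffProfile.continuous.comp (continuous_id.mul continuous_const)
  have hone : logCutoff 0 x = 1 :=
    cutoffProfile.one_of_mem_closedBall (by simp [cutoffProfile])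
  exact hone ▸ hcont.tendsto 0

end Norm

variable {E : Type*} [NormedAddCommGroup E] [InnerProductSpace ℝ E]

theorem deriv_log_one_add : deriv (fun u : ℝ => Real.log (1 + u)) = fun u => (1 + u)⁻¹ := by
  funext u
  rw [deriv_comp_const_add, Real.deriv_log]

theorem contDiffAt_log_one_add_norm_sq (x : E) {n : WithTop ℕ∞} :
    ContDiffAt ℝ n (fun y : E => Real.log (1 + ‖y‖ ^ 2)) x :=
  (contDiffAt_const.add (contDiff_norm_sq ℝ).contDiffAt).log (by positivity)

theorem contDiff_logCutoff (ε : ℝ) {n : ℕ∞} : ContDiff ℝ n (logCutoff (E := E) ε) :=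
  cutoffProfile.contDiff.comp
    (contDiff_iff_contDiffAt.2 fun x => contDiffAt_const.mul (contDiffAt_log_one_add_norm_sq x))

section Gradient

variable [CompleteSpace E]

theorem gradient_log_one_add_norm_sq (x : E) :
    ∇ (fun y : E => Real.log (1 + ‖y‖ ^ 2)) x = (2 * (1 + ‖x‖ ^ 2)⁻¹) • x := by
  have hx : 1 + ‖x‖ ^ 2 ≠ 0 := by positivity
  rw [gradient_comp (φ := fun u => Real.log (1 + u)) (f := fun y : E => ‖y‖ ^ 2)
    ((differentiableAt_id.const_add 1).log hx) (differentiableAt_id.norm_sq ℝ),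
    deriv_log_one_add, gradient_norm_sq, smul_smul, mul_comm]

theorem norm_gradient_log_one_add_norm_sq (x : E) :
    ‖∇ (fun y : E => Real.log (1 + ‖y‖ ^ 2)) x‖ = 2 * ‖x‖ / (1 + ‖x‖ ^ 2) := by
  rw [gradient_log_one_add_norm_sq, norm_smul, Real.norm_of_nonneg (by positivity)]
  ring

theorem norm_gradient_logCutoff (ε : ℝ) (x : E) :
    ‖∇ (logCutoff ε) x‖ = |ε * deriv cutoffProfile (ε * Real.log (1 + ‖x‖ ^ 2))|
      * (2 * ‖x‖ / (1 + ‖x‖ ^ 2)) := by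
  have hφ : Differentiable ℝ fun u => cutoffProfile (ε * u) :=
    (cutoffProfile.contDiff (n := 1)).differentiable one_ne_zero |>.comp
      (differentiable_id.const_mul ε)
  have hlog := (contDiffAt_log_one_add_norm_sq (n := 1) x).differentiableAt one_ne_zero
  unfold logCutoff
  rw [gradient_comp (hφ _) hlog, deriv_comp_mul_left, norm_smul,
    norm_gradient_log_one_add_norm_sq, smul_eq_mul, Real.norm_eq_abs]

end Gradient

variable [FiniteDimensional ℝ E]

theorem laplacian_log_one_add_norm_sq (x : E) :
    (Δ fun y : E => Real.log (1 + ‖y‖ ^ 2)) x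
      = 2 * Module.finrank ℝ E / (1 + ‖x‖ ^ 2) - (2 * ‖x‖ / (1 + ‖x‖ ^ 2)) ^ 2 := by
  have hx : 1 + ‖x‖ ^ 2 ≠ 0 := by positivity
  rw [laplacian_comp (φ := fun u => Real.log (1 + u)) (f := fun y : E => ‖y‖ ^ 2)
    ((contDiffAt_const.add contDiffAt_id).log hx) (contDiff_norm_sq ℝ).contDiffAt,
    deriv_log_one_add, deriv_comp_const_add (f := fun u : ℝ => u⁻¹), deriv_inv, gradient_norm_sq,
    laplacian_norm_sq, norm_smul]
  simp
  field

theorem two_mul_div_one_add_sq_le_one (r : ℝ) : 2 * r / (1 + r ^ 2) ≤ 1 := by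
  rw [div_le_one (by positivity)]
  nlinarith [sq_nonneg (r - 1)]

theorem abs_laplacian_log_one_add_norm_sq_le (x : E) :
    |((Δ fun y : E => Real.log (1 + ‖y‖ ^ 2)) x : ℝ)| ≤ (2 * Module.finrank ℝ E + 1 : ℝ) := by
  rw [laplacian_log_one_add_norm_sq]
  have hdiv : 2 * Module.finrank ℝ E / (1 + ‖x‖ ^ 2) ≤ (2 * Module.finrank ℝ E : ℝ) :=
    div_le_self (by positivity) (by nlinarith [sq_nonneg ‖x‖])
  have hsq : (2 * ‖x‖ / (1 + ‖x‖ ^ 2)) ^ 2 ≤ 1 :=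
    pow_le_one₀ (by positivity) (two_mul_div_one_add_sq_le_one _)
  refine abs_le.2 ⟨?_, ?_⟩
  · have : 0 ≤ 2 * Module.finrank ℝ E / (1 + ‖x‖ ^ 2) := by positivity
    linarith [(Module.finrank ℝ E).cast_nonneg (α := ℝ)]
  · linarith [sq_nonneg (2 * ‖x‖ / (1 + ‖x‖ ^ 2))]

theorem hasCompactSupport_logCutoff {ε : ℝ} (hε : 0 < ε) :
    HasCompactSupport (logCutoff (E := E) ε) := by
  refine HasCompactSupport.intro (isCompact_closedBall 0 (Real.exp ε⁻¹)) fun x hx => ?_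
  have hx : Real.exp ε⁻¹ < ‖x‖ := by simpa using hx
  have hx₀ : 0 < ‖x‖ := (Real.exp_pos _).trans hx
  have hlog : 2 * ε⁻¹ ≤ Real.log (1 + ‖x‖ ^ 2) :=
    calc 2 * ε⁻¹ ≤ 2 * Real.log ‖x‖ := by gcongr; exact ((Real.lt_log_iff_exp_lt hx₀).2 hx).le
      _ = Real.log (‖x‖ ^ 2) := by rw [Real.log_pow]; norm_cast
      _ ≤ Real.log (1 + ‖x‖ ^ 2) := Real.log_le_log (by positivity) (by linarith)
  refine cutoffProfile.zero_of_le_dist ?_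
  rw [Real.dist_0_eq_abs]
  calc (2 : ℝ) = ε * (2 * ε⁻¹) := by field
    _ ≤ ε * Real.log (1 + ‖x‖ ^ 2) := by gcongr
    _ ≤ _ := le_abs_self _

theorem laplacian_logCutoff (ε : ℝ) (x : E) :
    (Δ (logCutoff (E := E) ε)) x
      = ε ^ 2 * deriv (deriv cutoffProfile) (ε * Real.log (1 + ‖x‖ ^ 2))
        * (2 * ‖x‖ / (1 + ‖x‖ ^ 2)) ^ 2
      + ε * deriv cutoffProfile (ε * Real.log (1 + ‖x‖ ^ 2))
        * (Δ fun y : E => Real.log (1 + ‖y‖ ^ 2)) x := by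
  have hφ : ContDiff ℝ 2 fun u => cutoffProfile (ε * u) :=
    cutoffProfile.contDiff.comp (contDiff_const.mul contDiff_id)
  have hderiv : deriv (fun u => cutoffProfile (ε * u))
      = fun u => ε * deriv cutoffProfile (ε * u) := by
    funext u
    exact deriv_comp_mul_left ..
  have hderiv₂ (u : ℝ) : deriv (fun u => ε * deriv cutoffProfile (ε * u)) u
      = ε ^ 2 * deriv (deriv cutoffProfile) (ε * u) := by
    rw [deriv_const_mul_field, deriv_comp_mul_left ε (deriv cutoffProfile), smul_eq_mul]
    ring
  unfold logCutoff
  rw [laplacian_comp hφ.contDiffAt (contDiffAt_log_one_add_norm_sq x), hderiv, hderiv₂,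
    norm_gradient_log_one_add_norm_sq]

theorem exists_bound_gradient_laplacian_logCutoff :
    ∃ A : ℝ, 0 ≤ A ∧ ∀ ε ∈ Ioc (0 : ℝ) 1, ∀ x : E,
      ‖∇ (logCutoff ε) x‖ * (1 + ‖x‖ ^ 2) ≤ A * ε * ‖x‖ ∧
      |(Δ (logCutoff (E := E) ε)) x| ≤ A * ε := by
  obtain ⟨B, hB⟩ := exists_bound_deriv_cutoffProfile
  have hB₀ : 0 ≤ B := (abs_nonneg _).trans (hB 0).1
  let n : ℝ := Module.finrank ℝ E
  have hn : 0 ≤ n := Nat.cast_nonneg _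
  refine ⟨(2 * n + 2) * B, by positivity, fun ε hε x => ⟨?_, ?_⟩⟩
  all_goals
    have hε₀ : 0 ≤ ε := hε.1.le
    obtain ⟨hb', hb''⟩ := hB (ε * Real.log (1 + ‖x‖ ^ 2))
  · rw [norm_gradient_logCutoff, abs_mul, abs_of_nonneg hε₀]
    calc _ = ε * |deriv cutoffProfile (ε * Real.log (1 + ‖x‖ ^ 2))| * (2 * ‖x‖) := by field
      _ ≤ ε * B * ((2 * n + 2) * ‖x‖) := by gcongr; linarith
      _ = _ := by ring
  · have hr := two_mul_div_one_add_sq_le_one ‖x‖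
    have hΔ := abs_laplacian_log_one_add_norm_sq_le x
    rw [laplacian_logCutoff]
    refine (abs_add_le _ _).trans ?_
    rw [abs_mul, abs_mul, abs_mul, abs_mul, abs_of_nonneg hε₀, abs_of_nonneg (sq_nonneg ε),
      abs_of_nonneg (sq_nonneg (2 * ‖x‖ / _))]
    calc _ ≤ ε ^ 2 * B * 1 ^ 2 + ε * B * (2 * n + 1) := by gcongr
      _ ≤ ε * B * 1 ^ 2 + ε * B * (2 * n + 1) := by
        gcongr
        exact pow_le_of_le_one hε₀ hε.2 two_ne_zero
      _ = _ := by ring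

end LogCutoff

section Saturation

/-- A concave increasing function that approximates the identity on `[0, ∞)` as `ε → 0` while
staying below `1 / ε` (for `ε = 0` it takes the junk value `0`). -/
noncomputable def saturation (ε u : ℝ) : ℝ :=
  (1 - Real.exp (-(ε * u))) / ε

variable {ε : ℝ} {u : ℝ}

theorem contDiff_saturation {n : WithTop ℕ∞} : ContDiff ℝ n (saturation ε) := by
  unfold saturation
  fun_prop

theorem hasDerivAt_exp_neg_mul (ε u : ℝ) :
    HasDerivAt (fun u => Real.exp (-(ε * u))) (-(ε * Real.exp (-(ε * u)))) u := by
  convert! ((hasDerivAt_id u).const_mul ε).neg.exp using 1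
  simp
  ring

theorem deriv_saturation (hε : ε ≠ 0) : deriv (saturation ε) = fun u => Real.exp (-(ε * u)) := by
  funext u
  unfold saturation
  rw [(((hasDerivAt_exp_neg_mul ε u).const_sub 1).div_const ε).deriv]
  field

theorem deriv_deriv_saturation_nonpos (hε : 0 < ε) (u : ℝ) :
    deriv (deriv (saturation ε)) u ≤ 0 := by
  rw [deriv_saturation hε.ne', (hasDerivAt_exp_neg_mul ε u).deriv]
  exact neg_nonpos.2 (by positivity)

theorem saturation_nonneg (hε : 0 < ε) (hu : 0 ≤ u) : 0 ≤ saturation ε u :=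
  div_nonneg (sub_nonneg.2 (Real.exp_le_one_iff.2 (by nlinarith))) hε.le

theorem saturation_le_self (hε : 0 < ε) (u : ℝ) : saturation ε u ≤ u := by
  rw [saturation, div_le_iff₀' hε]
  linarith [Real.add_one_le_exp (-(ε * u))]

theorem saturation_mul_le_one (hε : 0 < ε) (u : ℝ) : saturation ε u * ε ≤ 1 := by
  rw [saturation, div_mul_cancel₀ _ hε.ne']
  linarith [Real.exp_nonneg (-(ε * u))]

theorem tendsto_saturation (u : ℝ) : Tendsto (fun ε => saturation ε u) (𝓝[≠] 0) (𝓝 u) := by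
  have hexp : HasDerivAt (fun ε => -Real.exp (-(ε * u))) u 0 := by
    simpa [mul_comm] using (hasDerivAt_exp_neg_mul u 0).fun_neg
  refine hexp.tendsto_slope.congr fun ε => ?_
  simp [slope_def_field, saturation]
  ring

end Saturation

section TestFunction

variable {E : Type*} [NormedAddCommGroup E] {Ψ : E → ℝ} {ε : ℝ} {x : E}

/-- The compactly supported approximation of `Ψ` that is tested against the rate bound. -/
noncomputable def truncatedPotential (Ψ : E → ℝ) (ε : ℝ) (x : E) : ℝ :=
  logCutoff ε x * saturation ε (Ψ x)

theorem truncatedPotential_nonneg (hε : 0 < ε) (hΨ : 0 ≤ Ψ x) : 0 ≤ truncatedPotential Ψ ε x :=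
  mul_nonneg (logCutoff_nonneg ε x) (saturation_nonneg hε hΨ)

theorem truncatedPotential_le_self (hε : 0 < ε) (hΨ : 0 ≤ Ψ x) :
    truncatedPotential Ψ ε x ≤ Ψ x :=
  (mul_le_of_le_one_left (saturation_nonneg hε hΨ) (logCutoff_le_one ε x)).trans
    (saturation_le_self hε _)

theorem tendsto_truncatedPotential (Ψ : E → ℝ) (x : E) :
    Tendsto (fun ε => truncatedPotential Ψ ε x) (𝓝[>] 0) (𝓝 (Ψ x)) := by
  have hlim := ((tendsto_logCutoff x).mono_left nhdsWithin_le_nhds).mul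
    ((tendsto_saturation (Ψ x)).mono_left (nhdsGT_le_nhdsNE 0))
  rwa [one_mul] at hlim

variable [InnerProductSpace ℝ E]

theorem contDiff_truncatedPotential {n : ℕ∞} (hΨ : ContDiff ℝ n Ψ) :
    ContDiff ℝ n (truncatedPotential Ψ ε) :=
  (contDiff_logCutoff ε).mul (contDiff_saturation.comp hΨ)

variable [FiniteDimensional ℝ E]

theorem hasCompactSupport_truncatedPotential (hε : 0 < ε) :
    HasCompactSupport (truncatedPotential Ψ ε) :=
  (hasCompactSupport_logCutoff hε).mul_right

/-- The compactly supported approximation of `‖∇Ψ‖²` that the rate integrand of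
`truncatedPotential Ψ ε` dominates. -/
noncomputable def truncatedDissipation (Ψ : E → ℝ) (ε : ℝ) (x : E) : ℝ :=
  logCutoff ε x * Real.exp (-(ε * Ψ x)) * ‖∇ Ψ x‖ ^ 2

theorem continuous_truncatedDissipation (hΨ : ContDiff ℝ 1 Ψ) :
    Continuous (truncatedDissipation Ψ ε) := by
  have hcutoff : Continuous (logCutoff (E := E) ε) := (contDiff_logCutoff ε (n := 0)).continuous
  have hgrad := continuous_gradient hΨ
  have hΨ := hΨ.continuous
  unfold truncatedDissipation
  fun_prop

theorem hasCompactSupport_truncatedDissipation (hε : 0 < ε) :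
    HasCompactSupport (truncatedDissipation Ψ ε) :=
  (hasCompactSupport_logCutoff hε).mul_right.mul_right

theorem truncatedDissipation_nonneg (Ψ : E → ℝ) (ε : ℝ) (x : E) :
    0 ≤ truncatedDissipation Ψ ε x := by
  have := logCutoff_nonneg ε x
  unfold truncatedDissipation
  positivity

theorem tendsto_truncatedDissipation (Ψ : E → ℝ) (x : E) :
    Tendsto (fun ε => truncatedDissipation Ψ ε x) (𝓝[>] 0) (𝓝 (‖∇ Ψ x‖ ^ 2)) := by
  have hexp : Tendsto (fun ε => Real.exp (-(ε * Ψ x))) (𝓝 0) (𝓝 1) := by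
    have hcont : Continuous fun ε => Real.exp (-(ε * Ψ x)) := by fun_prop
    simpa using hcont.tendsto 0
  have hlim := ((tendsto_logCutoff x).mul hexp).mul_const (‖∇ Ψ x‖ ^ 2)
  rw [one_mul, one_mul] at hlim
  exact hlim.mono_left nhdsWithin_le_nhds

theorem le_rateIntegrand_truncatedPotential {L : ℝ} (hε : 0 < ε) (hΨ : ContDiffAt ℝ 2 Ψ x)
    (hΨ₀ : 0 ≤ Ψ x) (hL : 0 ≤ L) (hΔΨ : (Δ Ψ) x ≤ L) :
    1 / 2 * truncatedDissipation Ψ ε x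
        - (L + saturation ε (Ψ x) * |(Δ (logCutoff (E := E) ε)) x|
          + (2 + saturation ε (Ψ x)) * (‖∇ (logCutoff ε) x‖ * ‖∇ Ψ x‖)
          + saturation ε (Ψ x) ^ 2 / 2 * ‖∇ (logCutoff ε) x‖ ^ 2)
      ≤ rateIntegrand Ψ (truncatedPotential Ψ ε) x := by
  have hderiv : deriv (saturation ε) (Ψ x) = Real.exp (-(ε * Ψ x)) := by
    rw [deriv_saturation hε.ne']
  have hexp_le : Real.exp (-(ε * Ψ x)) ≤ 1 :=
    Real.exp_le_one_iff.2 (neg_nonpos.2 (mul_nonneg hε.le hΨ₀))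
  have hlower := le_rateIntegrand_mul_comp (contDiff_logCutoff ε).contDiffAt
    (contDiff_saturation (ε := ε)).contDiffAt hΨ (logCutoff_nonneg ε x) (logCutoff_le_one ε x)
    (hderiv ▸ Real.exp_nonneg _) (hderiv ▸ hexp_le) (deriv_deriv_saturation_nonpos hε _) hL hΔΨ
  rw [abs_of_nonneg (saturation_nonneg hε hΨ₀), hderiv] at hlower
  refine le_of_eq_of_le ?_ hlower
  rw [truncatedDissipation]
  ring

theorem mul_le_mul_of_mul_one_add_sq_le {r v w a C : ℝ} (hv : v * (1 + r ^ 2) ≤ a * r)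
    (hw : r * w ≤ C * (1 + r ^ 2)) (ha : 0 ≤ a) (hw₀ : 0 ≤ w) : v * w ≤ a * C := by
  refine le_of_mul_le_mul_right ?_ (by positivity : 0 < 1 + r ^ 2)
  calc v * w * (1 + r ^ 2) = v * (1 + r ^ 2) * w := by ring
    _ ≤ a * r * w := mul_le_mul_of_nonneg_right hv hw₀
    _ = a * (r * w) := by ring
    _ ≤ a * (C * (1 + r ^ 2)) := mul_le_mul_of_nonneg_left hw ha
    _ = a * C * (1 + r ^ 2) := by ring

theorem exists_le_rateIntegrand_truncatedPotential {C L : ℝ} (hΨ : ContDiff ℝ 2 Ψ)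
    (hΨ₀ : ∀ x, 0 ≤ Ψ x) (hL : ∀ x, (Δ Ψ) x ≤ L)
    (hC : ∀ x, ‖x‖ * ‖∇ Ψ x‖ ≤ C * (1 + ‖x‖ ^ 2)) :
    ∃ K : ℝ, 0 ≤ K ∧ ∀ ε ∈ Ioc (0 : ℝ) 1, ∀ x,
      1 / 2 * truncatedDissipation Ψ ε x - K ≤ rateIntegrand Ψ (truncatedPotential Ψ ε) x := by
  obtain ⟨A, hA, hbound⟩ := exists_bound_gradient_laplacian_logCutoff (E := E)
  have hC₀ : 0 ≤ C := by simpa using hC 0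
  refine ⟨|L| + A + 3 * (A * C) + A ^ 2 / 2, by positivity, fun ε hε x => ?_⟩
  obtain ⟨hgrad, hΔ⟩ := hbound ε hε x
  have hε₀ := hε.1
  have hsat₀ := saturation_nonneg hε₀ (hΨ₀ x)
  have hsat := saturation_mul_le_one hε₀ (Ψ x)
  have hlower := le_rateIntegrand_truncatedPotential hε₀ hΨ.contDiffAt (hΨ₀ x) (abs_nonneg L)
    ((hL x).trans (le_abs_self L))
  set g := saturation ε (Ψ x)
  have hΔ_error : g * |(Δ (logCutoff (E := E) ε)) x| ≤ A :=
    calc _ ≤ g * (A * ε) := by gcongr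
      _ = A * (g * ε) := by ring
      _ ≤ A := mul_le_of_le_one_right hA hsat
  have hdrift_error : (2 + g) * (‖∇ (logCutoff ε) x‖ * ‖∇ Ψ x‖) ≤ 3 * (A * C) :=
    calc _ ≤ (2 + g) * (A * ε * C) :=
          mul_le_mul_of_nonneg_left (mul_le_mul_of_mul_one_add_sq_le hgrad (hC x) (by positivity)
            (norm_nonneg _)) (by positivity)
      _ = (2 * ε + g * ε) * (A * C) := by ring
      _ ≤ 3 * (A * C) := by gcongr; linarith [hε.2]
  have hsq_error : g ^ 2 / 2 * ‖∇ (logCutoff ε) x‖ ^ 2 ≤ A ^ 2 / 2 :=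
    calc _ ≤ g ^ 2 / 2 * (A * ε) ^ 2 := by
          gcongr
          simpa using mul_le_mul_of_mul_one_add_sq_le (w := 1) (C := 1) hgrad
            (by nlinarith [sq_nonneg (‖x‖ - 1)]) (by positivity) zero_le_one
      _ = (g * ε) ^ 2 * (A ^ 2 / 2) := by ring
      _ ≤ A ^ 2 / 2 := mul_le_of_le_one_left (by positivity) (pow_le_one₀ (by positivity) hsat)
  linarith

end TestFunction

section Fatou

theorem lintegral_le_liminf_of_tendsto {α : Type*} [MeasurableSpace α] {μ : Measure α}
    {F : ℕ → α → ENNReal} {f : α → ENNReal} (hF : ∀ n, AEMeasurable (F n) μ)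
    (hlim : ∀ x, Tendsto (F · x) atTop (𝓝 (f x))) :
    ∫⁻ x, f x ∂μ ≤ liminf (fun n => ∫⁻ x, F n x ∂μ) atTop := by
  simp_rw [← (hlim _).liminf_eq]
  exact lintegral_liminf_le' hF

namespace IsProbabilityFlow

variable {E : Type*} [NormedAddCommGroup E] [MeasurableSpace E] [BorelSpace E]
  {ρ : ℝ → Measure E} {T t B : ℝ} {f : E → ℝ} {F : ℕ → E → ℝ}

theorem lintegral_ofReal (hρ : IsProbabilityFlow ρ T) (ht : t ∈ Icc 0 T) (hf : Continuous f)
    (hfc : HasCompactSupport f) (hf₀ : ∀ x, 0 ≤ f x) :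
    ∫⁻ x, ENNReal.ofReal (f x) ∂ρ t = ENNReal.ofReal (∫ x, f x ∂ρ t) :=
  (ofReal_integral_eq_lintegral_ofReal (hρ.integrable ht hf hfc) (.of_forall hf₀)).symm

theorem aemeasurable_lintegral_ofReal (hρ : IsProbabilityFlow ρ T) (hf : Continuous f)
    (hfc : HasCompactSupport f) (hf₀ : ∀ x, 0 ≤ f x) :
    AEMeasurable (fun t => ∫⁻ x, ENNReal.ofReal (f x) ∂ρ t) (volume.restrict (Icc 0 T)) :=
  (hρ.aestronglyMeasurable_integral f hf hfc).aemeasurable.ennreal_ofReal.congr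
    ((ae_restrict_mem measurableSet_Icc).mono fun _ ht =>
      (hρ.lintegral_ofReal ht hf hfc hf₀).symm)

theorem lintegral_lintegral_ofReal (hρ : IsProbabilityFlow ρ T) (hT : 0 ≤ T) (hf : Continuous f)
    (hfc : HasCompactSupport f) (hf₀ : ∀ x, 0 ≤ f x) :
    ∫⁻ t in Icc 0 T, ∫⁻ x, ENNReal.ofReal (f x) ∂ρ t
      = ENNReal.ofReal (∫ t in 0..T, ∫ x, f x ∂ρ t) := by
  have hintegral := hρ.intervalIntegrable_integral ⟨hT, le_rfl⟩ hf hfc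
  rw [intervalIntegrable_iff_integrableOn_Icc_of_le hT] at hintegral
  rw [intervalIntegral.integral_of_le hT, ← integral_Icc_eq_integral_Ioc,
    ofReal_integral_eq_lintegral_ofReal hintegral (.of_forall fun t => integral_nonneg hf₀)]
  exact setLIntegral_congr_fun measurableSet_Icc fun t ht => hρ.lintegral_ofReal ht hf hfc hf₀

theorem lintegral_le_of_tendsto (hρ : IsProbabilityFlow ρ T) (ht : t ∈ Icc 0 T)
    (hF : ∀ n, Continuous (F n)) (hFc : ∀ n, HasCompactSupport (F n)) (hF₀ : ∀ n x, 0 ≤ F n x)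
    (hlim : ∀ x, Tendsto (F · x) atTop (𝓝 (f x))) (hB : ∀ n, ∫ x, F n x ∂ρ t ≤ B) :
    ∫⁻ x, ENNReal.ofReal (f x) ∂ρ t ≤ ENNReal.ofReal B := by
  refine (lintegral_le_liminf_of_tendsto (fun n => (hF n).measurable.ennreal_ofReal.aemeasurable)
    fun x => ENNReal.tendsto_ofReal (hlim x)).trans (liminf_le_of_le (by isBoundedDefault) ?_)
  intro b hb
  obtain ⟨n, hn⟩ := hb.exists
  rw [hρ.lintegral_ofReal ht (hF n) (hFc n) (hF₀ n)] at hn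
  exact hn.trans (ENNReal.ofReal_le_ofReal (hB n))

theorem lintegral_lintegral_le_of_tendsto (hρ : IsProbabilityFlow ρ T) (hT : 0 ≤ T)
    (hF : ∀ n, Continuous (F n)) (hFc : ∀ n, HasCompactSupport (F n)) (hF₀ : ∀ n x, 0 ≤ F n x)
    (hlim : ∀ x, Tendsto (F · x) atTop (𝓝 (f x)))
    (hB : ∀ n, ∫ t in 0..T, ∫ x, F n x ∂ρ t ≤ B) :
    ∫⁻ t in Icc 0 T, ∫⁻ x, ENNReal.ofReal (f x) ∂ρ t ≤ ENNReal.ofReal B := by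
  calc ∫⁻ t in Icc 0 T, ∫⁻ x, ENNReal.ofReal (f x) ∂ρ t
      ≤ ∫⁻ t in Icc 0 T, liminf (fun n => ∫⁻ x, ENNReal.ofReal (F n x) ∂ρ t) atTop :=
        lintegral_mono fun t => lintegral_le_liminf_of_tendsto
          (fun n => (hF n).measurable.ennreal_ofReal.aemeasurable)
          fun x => ENNReal.tendsto_ofReal (hlim x)
    _ ≤ liminf (fun n => ∫⁻ t in Icc 0 T, ∫⁻ x, ENNReal.ofReal (F n x) ∂ρ t) atTop :=
        lintegral_liminf_le' fun n => hρ.aemeasurable_lintegral_ofReal (hF n) (hFc n) (hF₀ n)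
    _ ≤ ENNReal.ofReal B := by
        simp_rw [hρ.lintegral_lintegral_ofReal hT (hF _) (hFc _) (hF₀ _)]
        exact liminf_le_of_le (by isBoundedDefault) fun b hb =>
          hb.exists.elim fun n hn => hn.trans (ENNReal.ofReal_le_ofReal (hB n))

end IsProbabilityFlow

end Fatou

section MainEstimate

variable {E : Type*} [NormedAddCommGroup E] [InnerProductSpace ℝ E] [FiniteDimensional ℝ E]
  [MeasurableSpace E] [BorelSpace E] {Ψ : E → ℝ} {ρ : ℝ → Measure E} {C L J T : ℝ}

theorem exists_integral_truncatedPotential_add_le (hΨ : ContDiff ℝ 2 Ψ) (hΨ₀ : ∀ x, 0 ≤ Ψ x)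
    (hL : ∀ x, (Δ Ψ) x ≤ L) (hC : ∀ x, ‖x‖ * ‖∇ Ψ x‖ ≤ C * (1 + ‖x‖ ^ 2)) (hT : 0 ≤ T)
    (hρ : IsProbabilityFlow ρ T) (hΨint : Integrable Ψ (ρ 0)) (hJ : WeakRateBound ∞ Ψ ρ T J) :
    ∃ B : ℝ, ∀ ε ∈ Ioc (0 : ℝ) 1, ∀ s ∈ Icc 0 T,
      ∫ x, truncatedPotential Ψ ε x ∂ρ s
        + 1 / 2 * ∫ t in 0..s, ∫ x, truncatedDissipation Ψ ε x ∂ρ t ≤ B := by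
  obtain ⟨K, hK, hrate⟩ := exists_le_rateIntegrand_truncatedPotential hΨ hΨ₀ hL hC
  refine ⟨J + ∫ x, Ψ x ∂ρ 0 + K * T, fun ε hε s hs => ?_⟩
  have hΨ₁ := hΨ.of_le one_le_two
  have hp : ContDiff ℝ 2 (truncatedPotential Ψ ε) := contDiff_truncatedPotential (n := 2) hΨ
  have hpc : HasCompactSupport (truncatedPotential Ψ ε) := hasCompactSupport_truncatedPotential hε.1
  have hinitial : ∫ x, truncatedPotential Ψ ε x ∂ρ 0 ≤ ∫ x, Ψ x ∂ρ 0 :=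
    integral_mono (hρ.integrable ⟨le_rfl, hT⟩ hp.continuous hpc) hΨint fun x =>
      truncatedPotential_le_self hε.1 (hΨ₀ x)
  have hbound := (weakRateBound_two_of_infty hρ hΨ₁ hJ).integral_add_half_intervalIntegral_le
    hρ hΨ₁ hp hpc (continuous_truncatedDissipation hΨ₁)
    (hasCompactSupport_truncatedDissipation hε.1) hK (hrate ε hε) hs
  linarith

theorem exists_lintegral_le_of_nonneg (hΨ : ContDiff ℝ 2 Ψ) (hΨ₀ : ∀ x, 0 ≤ Ψ x)
    (hL : ∀ x, (Δ Ψ) x ≤ L) (hC : ∀ x, ‖x‖ * ‖∇ Ψ x‖ ≤ C * (1 + ‖x‖ ^ 2)) (hT : 0 ≤ T)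
    (hρ : IsProbabilityFlow ρ T) (hΨint : Integrable Ψ (ρ 0)) (hJ : WeakRateBound ∞ Ψ ρ T J) :
    ∃ B : ℝ, (∀ t ∈ Icc 0 T, ∫⁻ x, ENNReal.ofReal (Ψ x) ∂ρ t ≤ ENNReal.ofReal B) ∧
      ∫⁻ t in Icc 0 T, ∫⁻ x, ENNReal.ofReal (‖∇ Ψ x‖ ^ 2) ∂ρ t ≤ ENNReal.ofReal (2 * B) := by
  obtain ⟨B, hB⟩ := exists_integral_truncatedPotential_add_le hΨ hΨ₀ hL hC hT hρ hΨint hJ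
  let ε : ℕ → ℝ := fun n => 1 / (n + 1)
  have hε : ∀ n, ε n ∈ Ioc (0 : ℝ) 1 := fun n =>
    ⟨Nat.one_div_pos_of_nat, div_le_one_of_le₀ (by simp) (by positivity)⟩
  have hε_lim : Tendsto ε atTop (𝓝[>] 0) :=
    tendsto_nhdsWithin_iff.2 ⟨tendsto_one_div_add_atTop_nhds_zero_nat, .of_forall fun n => (hε n).1⟩
  have hpotential (n : ℕ) (x : E) := truncatedPotential_nonneg (hε n).1 (hΨ₀ x)
  have hdissipation (n : ℕ) := truncatedDissipation_nonneg Ψ (ε n)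
  refine ⟨B, fun t ht => ?_, ?_⟩
  · refine hρ.lintegral_le_of_tendsto ht
      (fun n => (contDiff_truncatedPotential (n := 2) hΨ).continuous)
      (fun n => hasCompactSupport_truncatedPotential (hε n).1) hpotential
      (fun x => (tendsto_truncatedPotential Ψ x).comp hε_lim) fun n => ?_
    have := intervalIntegral.integral_nonneg (μ := volume) ht.1 fun r _ =>
      integral_nonneg (μ := ρ r) (hdissipation n)
    linarith [hB _ (hε n) t ht]
  · refine hρ.lintegral_lintegral_le_of_tendsto hT
      (fun n => continuous_truncatedDissipation (hΨ.of_le one_le_two))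
      (fun n => hasCompactSupport_truncatedDissipation (hε n).1) hdissipation
      (fun x => (tendsto_truncatedDissipation Ψ x).comp hε_lim) fun n => ?_
    have : 0 ≤ ∫ x, truncatedPotential Ψ (ε n) x ∂ρ T := integral_nonneg (hpotential n)
    linarith [hB _ (hε n) T ⟨hT, le_rfl⟩]

theorem sup_absPsi_and_gradPsi_sq_finite_general (hΨ : ContDiff ℝ 2 Ψ)
    (hbelow : ∃ c : ℝ, ∀ x, c ≤ Ψ x) (hL : ∀ x, (Δ Ψ) x ≤ L)
    (hC : ∀ x, ‖x‖ * ‖∇ Ψ x‖ ≤ C * (1 + ‖x‖ ^ 2)) (hT : 0 ≤ T) (hρ : IsProbabilityFlow ρ T)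
    (hΨint : Integrable Ψ (ρ 0)) (hJ : WeakRateBound ∞ Ψ ρ T J) :
    (⨆ t ∈ Icc 0 T, ∫⁻ x, ENNReal.ofReal |Ψ x| ∂ρ t) < ⊤ ∧
      ∫⁻ t in Icc 0 T, ∫⁻ x, ENNReal.ofReal (‖∇ Ψ x‖ ^ 2) ∂ρ t < ⊤ := by
  obtain ⟨c, hc⟩ := hbelow
  have := hρ.isProbabilityMeasure 0 ⟨le_rfl, hT⟩
  obtain ⟨B, hpotential, hdissipation⟩ := exists_lintegral_le_of_nonneg
    (Ψ := fun x => Ψ x - c) (hΨ.sub contDiff_const) (fun x => sub_nonneg.2 (hc x))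
    (by simpa only [laplacian_sub_const hΨ] using hL)
    (by simpa only [gradient_sub_const] using hC) hT hρ (hΨint.sub (integrable_const c))
    (by simpa only [WeakRateBound, rateIntegrand_sub_const] using hJ)
  rw [gradient_sub_const] at hdissipation
  refine ⟨lt_of_le_of_lt (iSup₂_le fun t ht => ?_)
    (ENNReal.add_lt_top.2 ⟨ENNReal.ofReal_lt_top (r := B), ENNReal.ofReal_lt_top (r := |c|)⟩),
    hdissipation.trans_lt ENNReal.ofReal_lt_top⟩
  have := hρ.isProbabilityMeasure t ht
  have habs (x : E) : |Ψ x| ≤ (Ψ x - c) + |c| := by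
    simpa [abs_of_nonneg (sub_nonneg.2 (hc x))] using abs_add_le (Ψ x - c) c
  calc ∫⁻ x, ENNReal.ofReal |Ψ x| ∂ρ t
      ≤ ∫⁻ x, (ENNReal.ofReal (Ψ x - c) + ENNReal.ofReal |c|) ∂ρ t :=
        lintegral_mono fun x => (ENNReal.ofReal_le_ofReal (habs x)).trans ENNReal.ofReal_add_le
    _ = ∫⁻ x, ENNReal.ofReal (Ψ x - c) ∂ρ t + ENNReal.ofReal |c| := by
        rw [lintegral_add_right _ measurable_const]; simp
    _ ≤ ENNReal.ofReal B + ENNReal.ofReal |c| := by gcongr; exact hpotential t ht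

end MainEstimate

section CoordinateLaplacian

theorem lapl_eq_laplacian {d : ℕ} {f : EuclideanSpace ℝ (Fin d) → ℝ} (hf : ContDiff ℝ 2 f) :
    lapl f = Δ f := by
  funext x
  have hf' : DifferentiableAt ℝ (fderiv ℝ f) x := differentiableAt_fderiv hf.contDiffAt
  rw [laplacian_eq_sum_fderiv_fderiv (EuclideanSpace.basisFun (Fin d) ℝ), lapl]
  simp [fderiv_clm_apply hf' (differentiableAt_const _)]

end CoordinateLaplacian

/-- Let `Ψ ∈ C²(ℝ^d)` be convex, bounded below, with bounded Laplacian
and subquadratic growth `|x||∇Ψ(x)| ≤ C(1+|x|²)`.  Let `(ρ_t)` be a narrowly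
continuous family of probability measures with `∫Ψ dρ_0 < ∞` satisfying, for a finite
constant `J`, the weak rate-functional bound tested against all `p ∈ C_c^∞` and
`s ∈ [0,1]`.  Then `sup_{t∈[0,1]} ∫|Ψ| dρ_t < ∞` and `∫_0^1 ∫ |∇Ψ|² dρ_t dt < ∞`. -/
theorem sup_absPsi_and_gradPsi_sq_finite (d : ℕ) (Ψ : EuclideanSpace ℝ (Fin d) → ℝ)
    (hΨ : ContDiff ℝ 2 Ψ)
    (hconv : ConvexOn ℝ Set.univ Ψ)
    (hbelow : ∃ c : ℝ, ∀ x, c ≤ Ψ x)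
    (hlap : ∃ Cl : ℝ, ∀ x, |lapl Ψ x| ≤ Cl)
    (C : ℝ) (hC : 0 < C) (hgrowth : ∀ x, ‖x‖ * ‖gradient Ψ x‖ ≤ C * (1 + ‖x‖ ^ 2))
    (ρ : ℝ → Measure (EuclideanSpace ℝ (Fin d)))
    (hprob : ∀ t ∈ Set.Icc (0 : ℝ) 1, IsProbabilityMeasure (ρ t))
    (hnarrow : ∀ φ : BoundedContinuousFunction (EuclideanSpace ℝ (Fin d)) ℝ,
      ContinuousOn (fun t => ∫ x, φ x ∂(ρ t)) (Set.Icc (0 : ℝ) 1))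
    (hΨint : Integrable Ψ (ρ 0))
    (J : ℝ)
    (hJ : ∀ p : EuclideanSpace ℝ (Fin d) → ℝ, ContDiff ℝ (⊤ : ℕ∞) p → HasCompactSupport p →
      ∀ s ∈ Set.Icc (0 : ℝ) 1,
        (∫ x, p x ∂(ρ s)) - (∫ x, p x ∂(ρ 0))
          - (∫ t in (0 : ℝ)..s, (∫ x, lapl p x ∂(ρ t)))
          + (∫ t in (0 : ℝ)..s, (∫ x, ⟪gradient Ψ x, gradient p x⟫ ∂(ρ t)))
          - (1 / 2) * (∫ t in (0 : ℝ)..s, (∫ x, ‖gradient p x‖ ^ 2 ∂(ρ t))) ≤ J) :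
    (⨆ t ∈ Set.Icc (0 : ℝ) 1, ∫⁻ x, ENNReal.ofReal |Ψ x| ∂(ρ t)) < ⊤ ∧
    (∫⁻ t in Set.Icc (0 : ℝ) 1, ∫⁻ x, ENNReal.ofReal (‖gradient Ψ x‖ ^ 2) ∂(ρ t)) < ⊤ := by
  obtain ⟨Cl, hCl⟩ := hlap
  have hρ : IsProbabilityFlow ρ 1 := isProbabilityFlow_of_continuousOn hprob hnarrow
  have hrate : WeakRateBound ∞ Ψ ρ 1 J := fun p hp hpc s hs => by
    have hp₂ : ContDiff ℝ 2 p := contDiff_infty.1 hp 2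
    rw [intervalIntegral_rateIntegrand hρ (hΨ.of_le one_le_two) hp₂ hpc hs,
      ← lapl_eq_laplacian hp₂]
    linarith [hJ p hp hpc s hs]
  have hupper (x : EuclideanSpace ℝ (Fin d)) : (Δ Ψ) x ≤ Cl :=
    lapl_eq_laplacian hΨ ▸ (le_abs_self _).trans (hCl x)
  exact sup_absPsi_and_gradPsi_sq_finite_general hΨ hbelow hupper hgrowth zero_le_one hρ hΨint
    hrate
end
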